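/- arXiv:2601.20018 — 2 statements merged into one kernel-verified Lean document; each statement's English description precedes it below -/
import Mathlib

section
/- Let N ≥ 20 and let D = [d(i,j,k,ℓ)] ∈ R^{N×N×N×N} be a degenerate tensor. Let N₁ = ⌈N/2⌉, let I and J be independent, each uniformly distributed over the size-N₁ subsets of [N], and given (I,J) let π₁ be uniformly distributed over the bijections I → J and π₂ uniformly distributed over the bijections I^c → J^c, with π₁ and π₂ conditionally independent; let π be uniformly distributed on S_N, independent of (I,J,π₁,π₂). Define Ṽ := (1/N²) Σ_{i,j,k,ℓ∈[N]} d(i,j,k,ℓ)². Then for every λ ≥ 0: E[ exp( λ ( Σ_{i≠j} d(i,j,π(i),π(j)) − E[ Σ_{i≠j} d(i,j,π(i),π(j)) ] ) ) ] ≤ exp(50 Ṽ λ²) · ( E[ exp( 9 λ Σ_{i∈I, j∈I^c} d̃_{I,J}(i,j,π₁(i),π₂(j)) ) ] )^{1/2}. -/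
open scoped BigOperators Classical

/-- Average of `f` over a finite set. -/
noncomputable def avgOn {α : Type*} (s : Finset α) (f : α → ℝ) : ℝ :=
  (∑ x ∈ s, f x) / (s.card : ℝ)

/-- The fully centered restriction `d̃_{I,J}` of a fourth-order tensor `d`,
obtained by inclusion–exclusion of partial averages over
`I` (1st coordinate), `Iᶜ` (2nd), `J` (3rd), `Jᶜ` (4th). -/
noncomputable def tildeD {N : ℕ} (d : Fin N → Fin N → Fin N → Fin N → ℝ)
    (I J : Finset (Fin N)) (i j k l : Fin N) : ℝ :=
  d i j k l
    - avgOn I (fun i' => d i' j k l)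
    - avgOn Iᶜ (fun j' => d i j' k l)
    - avgOn J (fun k' => d i j k' l)
    - avgOn Jᶜ (fun l' => d i j k l')
    + avgOn I (fun i' => avgOn Iᶜ (fun j' => d i' j' k l))
    + avgOn I (fun i' => avgOn J (fun k' => d i' j k' l))
    + avgOn I (fun i' => avgOn Jᶜ (fun l' => d i' j k l'))
    + avgOn Iᶜ (fun j' => avgOn J (fun k' => d i j' k' l))
    + avgOn Iᶜ (fun j' => avgOn Jᶜ (fun l' => d i j' k l'))
    + avgOn J (fun k' => avgOn Jᶜ (fun l' => d i j k' l'))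
    - avgOn I (fun i' => avgOn Iᶜ (fun j' => avgOn J (fun k' => d i' j' k' l)))
    - avgOn I (fun i' => avgOn Iᶜ (fun j' => avgOn Jᶜ (fun l' => d i' j' k l')))
    - avgOn I (fun i' => avgOn J (fun k' => avgOn Jᶜ (fun l' => d i' j k' l')))
    - avgOn Iᶜ (fun j' => avgOn J (fun k' => avgOn Jᶜ (fun l' => d i j' k' l')))
    + avgOn I (fun i' => avgOn Iᶜ (fun j' =>
        avgOn J (fun k' => avgOn Jᶜ (fun l' => d i' j' k' l'))))

/-- Expectation of `f` under the uniform distribution on `S_N`. -/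
noncomputable def permExp (N : ℕ) (f : Equiv.Perm (Fin N) → ℝ) : ℝ :=
  (∑ σ : Equiv.Perm (Fin N), f σ) / (Nat.factorial N : ℝ)

/-- The set of (total-function representatives of) bijections from `I` onto `J`:
functions `Fin N → Fin N` mapping `I` bijectively onto `J`.  Averaging a
quantity that depends only on the restriction to `I` over this set is the same
as averaging over the bijections `I → J`. -/
noncomputable def bijSet {N : ℕ} (I J : Finset (Fin N)) : Finset (Fin N → Fin N) :=
  Finset.univ.filter (fun f : Fin N → Fin N =>
    Set.BijOn f (I : Set (Fin N)) (J : Set (Fin N)))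


lemma cd_hoeff {Ω : Type*} [Fintype Ω] [Nonempty Ω] (X : Ω → ℝ) (a b : ℝ)
    (h : ∀ ω, a ≤ X ω ∧ X ω ≤ b) :
    (∑ ω, Real.exp (X ω)) / (Fintype.card Ω : ℝ)
      ≤ Real.exp ((∑ ω, X ω) / (Fintype.card Ω : ℝ) + (b - a) ^ 2 / 8) := by
  letI : MeasurableSpace Ω := ⊤
  haveI : MeasurableSingletonClass Ω := ⟨fun _ => trivial⟩
  let μ : MeasureTheory.Measure Ω := (PMF.uniformOfFintype Ω).toMeasure
  have key : ∀ f : Ω → ℝ, ∫ ω, f ω ∂μ = (∑ ω, f ω) / (Fintype.card Ω : ℝ) := by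
    intro f
    rw [PMF.integral_eq_sum]
    simp only [PMF.uniformOfFintype_apply, smul_eq_mul, ENNReal.toReal_inv, ENNReal.toReal_natCast]
    rw [← Finset.mul_sum, div_eq_inv_mul]
  have hs := ProbabilityTheory.hasSubgaussianMGF_of_mem_Icc (μ := μ) (X := X) (a := a) (b := b)
    (measurable_from_top.aemeasurable) (Filter.Eventually.of_forall fun ω => ⟨(h ω).1, (h ω).2⟩)
  have h1 := hs.mgf_le 1
  unfold ProbabilityTheory.mgf at h1
  rw [key, key] at h1
  have hc : ((((‖b - a‖₊ / 2) ^ 2 : NNReal)) : ℝ) = (b - a) ^ 2 / 4 := by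
    push_cast
    rw [div_pow, Real.norm_eq_abs, sq_abs]; norm_num
  rw [hc] at h1
  set m := (∑ ω, X ω) / (Fintype.card Ω : ℝ)
  have h2 : ∑ ω, Real.exp (1 * (X ω - m)) = Real.exp (-m) * ∑ ω, Real.exp (X ω) := by
    rw [Finset.mul_sum]
    refine Finset.sum_congr rfl fun ω _ => ?_
    rw [← Real.exp_add]; congr 1; ring
  rw [h2] at h1
  have h3 : (∑ ω, Real.exp (X ω)) / (Fintype.card Ω : ℝ)
      = Real.exp m * (Real.exp (-m) * (∑ ω, Real.exp (X ω)) / (Fintype.card Ω : ℝ)) := by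
    rw [mul_div_assoc, ← mul_assoc, ← Real.exp_add]; simp
  rw [h3, Real.exp_add]
  refine mul_le_mul_of_nonneg_left (h1.trans (le_of_eq ?_)) (Real.exp_pos _).le
  congr 1; ring

lemma cd_sum_succ {n : ℕ} (p : Fin (n+1)) (f : Fin (n+1) → ℝ) :
    ∑ k : Fin n, f (Equiv.swap 0 p k.succ) = (∑ k, f k) - f p := by
  rw [← Equiv.sum_comp (Equiv.swap 0 p) f, Fin.sum_univ_succ]
  simp

/-- mgf of the combinatorial sum, column-centered induction step included -/
lemma cd_mgf : ∀ (n : ℕ) (e : Fin n → Fin n → ℝ),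
    (∑ σ : Equiv.Perm (Fin n), Real.exp (∑ i, e i (σ i))) / (Nat.factorial n : ℝ)
      ≤ Real.exp ((∑ i, ∑ k, e i k) / (n : ℝ) + ∑ i, ∑ k, (e i k) ^ 2) := by
  intro n
  induction n with
  | zero => intro e; simp
  | succ n ih =>
    -- centered case
    have cen : ∀ e : Fin (n+1) → Fin (n+1) → ℝ, (∀ k, ∑ i, e i k = 0) →
        (∑ σ : Equiv.Perm (Fin (n+1)), Real.exp (∑ i, e i (σ i))) / (Nat.factorial (n+1) : ℝ)
          ≤ Real.exp (∑ i, ∑ k, (e i k) ^ 2) := by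
      intro e he
      rcases Nat.eq_zero_or_pos n with hn | hn
      · subst hn
        have : ∀ σ : Equiv.Perm (Fin 1), ∑ i, e i (σ i) = 0 := by
          intro σ
          have := he 0
          simp at this ⊢
          rw [Subsingleton.elim (σ 0) 0]; exact this
        simp only [this]
        simp
        positivity
      have hn' : (0:ℝ) < n := by exact_mod_cast hn
      set Q := ∑ i : Fin n, ∑ k, (e i.succ k) ^ 2 with hQ
      set c : ℝ := ((n:ℝ)+1)/n with hc
      set r := ∑ k, e 0 k
      have hsplit : ∑ i, ∑ k, (e i k) ^ 2 = (∑ k, (e 0 k)^2) + Q := by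
        rw [Fin.sum_univ_succ]
      have step : ∀ p : Fin (n+1),
          (∑ τ : Equiv.Perm (Fin n), Real.exp (∑ i : Fin n, e i.succ (Equiv.swap 0 p (τ i).succ)))
            ≤ (Nat.factorial n : ℝ) * Real.exp ((-r + e 0 p)/n + Q) := by
        intro p
        have h := ih (fun i k => e i.succ (Equiv.swap 0 p k.succ))
        rw [div_le_iff₀ (by positivity), mul_comm] at h
        refine h.trans ?_
        refine mul_le_mul_of_nonneg_left (Real.exp_le_exp.mpr ?_) (by positivity)
        refine add_le_add (le_of_eq ?_) ?_
        · congr 1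
          have : ∀ i : Fin n, ∑ k : Fin n, e i.succ (Equiv.swap 0 p k.succ)
              = (∑ k, e i.succ k) - e i.succ p := fun i => cd_sum_succ p (e i.succ)
          simp only [this]
          rw [Finset.sum_sub_distrib]
          have h1 : e 0 p + ∑ i : Fin n, e i.succ p = 0 := by rw [← he p, Fin.sum_univ_succ]
          have h2 : r + ∑ i : Fin n, ∑ k, e i.succ k = 0 := by
            have : ∑ i, ∑ k, e i k = 0 := by
              rw [Finset.sum_comm]; simp [he]
            rw [← this, Fin.sum_univ_succ]
          linarith
        · refine Finset.sum_le_sum fun i _ => ?_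
          have := cd_sum_succ p (fun k => (e i.succ k)^2)
          rw [this]
          nlinarith [sq_nonneg (e i.succ p)]
      have hexp : (∑ σ : Equiv.Perm (Fin (n+1)), Real.exp (∑ i, e i (σ i)))
          ≤ ∑ p, (Nat.factorial n : ℝ) * Real.exp ((-r/n + Q) + c * e 0 p) := by
        rw [← Equiv.sum_comp (Equiv.Perm.decomposeFin).symm, Fintype.sum_prod_type]
        refine Finset.sum_le_sum fun p _ => ?_
        have : ∀ τ : Equiv.Perm (Fin n),
            Real.exp (∑ i, e i ((Equiv.Perm.decomposeFin.symm (p, τ)) i))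
              = Real.exp (e 0 p) * Real.exp (∑ i : Fin n, e i.succ (Equiv.swap 0 p (τ i).succ)) := by
          intro τ
          rw [← Real.exp_add, Fin.sum_univ_succ]
          simp
        simp only [this]
        rw [← Finset.mul_sum]
        refine (mul_le_mul_of_nonneg_left (step p) (Real.exp_pos _).le).trans (le_of_eq ?_)
        rw [mul_left_comm, ← Real.exp_add]
        congr 2
        rw [hc]; field_simp; ring
      have hho := cd_hoeff (fun p : Fin (n+1) => c * e 0 p)
        (c * (Finset.univ.inf' Finset.univ_nonempty (e 0)))
        (c * (Finset.univ.sup' Finset.univ_nonempty (e 0)))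
        (fun p => ⟨mul_le_mul_of_nonneg_left (Finset.inf'_le _ (Finset.mem_univ p)) (by positivity),
          mul_le_mul_of_nonneg_left (Finset.le_sup' _ (Finset.mem_univ p)) (by positivity)⟩)
      obtain ⟨x, -, hx⟩ := Finset.exists_mem_eq_inf' (Finset.univ_nonempty (α := Fin (n+1))) (e 0)
      obtain ⟨y, -, hy⟩ := Finset.exists_mem_eq_sup' (Finset.univ_nonempty (α := Fin (n+1))) (e 0)
      rw [hx, hy] at hho
      have hrange : (e 0 y - e 0 x)^2 ≤ 2 * ∑ k, (e 0 k)^2 := by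
        by_cases hxy : x = y
        · subst hxy; simp; exact Finset.sum_nonneg fun _ _ => sq_nonneg _
        · have : ∑ k ∈ ({x, y} : Finset (Fin (n+1))), (e 0 k)^2 ≤ ∑ k, (e 0 k)^2 :=
            Finset.sum_le_sum_of_subset_of_nonneg (Finset.subset_univ _) fun _ _ _ => sq_nonneg _
          rw [Finset.sum_pair hxy] at this
          nlinarith [sq_nonneg (e 0 y + e 0 x)]
      have hc2 : c ≤ 2 := by
        rw [hc, div_le_iff₀ hn']
        have : (1:ℝ) ≤ n := by exact_mod_cast hn
        linarith
      have hc0 : 0 ≤ c := by positivity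
      have hcr : (c * e 0 y - c * e 0 x)^2 / 8 ≤ ∑ k, (e 0 k)^2 := by
        have h1 : (c * e 0 y - c * e 0 x)^2 = c^2 * (e 0 y - e 0 x)^2 := by ring
        have h2 : c^2 ≤ 4 := by nlinarith
        rw [h1]
        nlinarith [sq_nonneg (e 0 y - e 0 x)]
      rw [Fintype.card_fin, div_le_iff₀ (by positivity)] at hho
      rw [div_le_iff₀ (by positivity)]
      refine hexp.trans ?_
      have : ∑ p, (Nat.factorial n : ℝ) * Real.exp ((-r/n + Q) + c * e 0 p)
          = (Nat.factorial n : ℝ) * Real.exp (-r/n+Q) * ∑ p, Real.exp (c * e 0 p) := by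
        rw [Finset.mul_sum]; refine Finset.sum_congr rfl fun p _ => ?_
        rw [Real.exp_add]; ring
      rw [this]
      refine (mul_le_mul_of_nonneg_left hho (by positivity)).trans ?_
      have hrr : (∑ p, c * e 0 p) / ((n+1 : ℕ):ℝ) = r / n := by
        rw [← Finset.mul_sum, hc]; push_cast; field_simp; rfl
      rw [hrr, Nat.factorial_succ]
      push_cast
      have : Real.exp (-r/n+Q) * Real.exp (r/n + (c * e 0 y - c * e 0 x)^2/8)
          ≤ Real.exp (∑ i, ∑ k, (e i k) ^ 2) := by
        rw [← Real.exp_add]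
        apply Real.exp_le_exp.mpr
        rw [hsplit, neg_div]; linarith
      calc _ = (Nat.factorial n : ℝ) * (n+1) * (Real.exp (-r/n+Q) * Real.exp (r/n + (c * e 0 y - c * e 0 x)^2/8)) := by ring
        _ ≤ (Nat.factorial n : ℝ) * (n+1) * Real.exp (∑ i, ∑ k, (e i k) ^ 2) :=
            mul_le_mul_of_nonneg_left this (by positivity)
        _ = _ := by ring
    intro e
    set m : Fin (n+1) → ℝ := fun k => (∑ i, e i k) / ((n+1 : ℕ):ℝ) with hm
    have hpos : (0:ℝ) < ((n+1 : ℕ):ℝ) := by positivity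
    have h := cen (fun i k => e i k - m k) (by
      intro k
      rw [Finset.sum_sub_distrib]
      simp [hm]
      field_simp; ring)
    have e1 : ∀ σ : Equiv.Perm (Fin (n+1)), Real.exp (∑ i, (e i (σ i) - m (σ i)))
        = Real.exp (∑ i, e i (σ i)) * Real.exp (-∑ k, m k) := by
      intro σ
      rw [← Real.exp_add, Finset.sum_sub_distrib, Equiv.sum_comp σ m]; congr 1
    simp only [e1] at h
    rw [← Finset.sum_mul] at h
    have e2 : ∑ k, m k = (∑ i, ∑ k, e i k) / ((n+1 : ℕ):ℝ) := by
      rw [Finset.sum_comm, Finset.sum_div]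
    have e3 : ∑ i, ∑ k, (e i k - m k)^2 ≤ ∑ i, ∑ k, (e i k)^2 := by
      rw [Finset.sum_comm]
      nth_rewrite 2 [Finset.sum_comm]
      refine Finset.sum_le_sum fun k _ => ?_
      have : ∑ i, (e i k - m k)^2 = ∑ i, (e i k)^2 - 2 * m k * (∑ i, e i k) + ((n+1 : ℕ):ℝ) * (m k)^2 := by
        simp only [sub_sq, Finset.sum_add_distrib, Finset.sum_sub_distrib]
        simp [Finset.mul_sum, Finset.sum_mul]
        refine Finset.sum_congr rfl fun i _ => ?_
        ring
      have h2 : ∑ i, e i k = ((n+1 : ℕ):ℝ) * m k := by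
        simp only [hm]; field_simp
      rw [this, h2]
      nlinarith [mul_nonneg hpos.le (sq_nonneg (m k))]
    rw [← e2, Real.exp_add]
    have : (∑ σ : Equiv.Perm (Fin (n+1)), Real.exp (∑ i, e i (σ i))) / (Nat.factorial (n+1) : ℝ)
      = Real.exp (∑ k, m k) * ((∑ σ : Equiv.Perm (Fin (n+1)), Real.exp (∑ i, e i (σ i))) * Real.exp (-∑ k, m k) / (Nat.factorial (n+1) : ℝ)) := by
      rw [Real.exp_neg]; field_simp
    rw [this]
    exact mul_le_mul_of_nonneg_left (h.trans (Real.exp_le_exp.mpr e3)) (Real.exp_pos _).le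

lemma cd_avg_bij {N : ℕ} {I J : Finset (Fin N)} {f : Fin N → Fin N}
    (hf : Set.BijOn f (I : Set (Fin N)) (J : Set (Fin N))) (F : Fin N → ℝ) :
    avgOn J F = avgOn I (fun i => F (f i)) := by
  have hJ : J = I.image f := by
    apply Finset.coe_injective
    rw [Finset.coe_image, hf.image_eq]
  have hinj : Set.InjOn f (I : Set (Fin N)) := hf.injOn
  unfold avgOn
  rw [hJ, Finset.sum_image hinj, Finset.card_image_of_injOn hinj]

lemma cd_tilde_aux {N : ℕ} (s t : Finset (Fin N)) (hs : s.Nonempty) (ht : t.Nonempty)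
    (h : Fin N → Fin N → Fin N → Fin N → ℝ) :
    ∑ i ∈ s, ∑ j ∈ t, (h i j i j
    - avgOn s (fun i' => h i' j i j)
    - avgOn t (fun j' => h i j' i j)
    - avgOn s (fun k' => h i j k' j)
    - avgOn t (fun l' => h i j i l')
    + avgOn s (fun i' => avgOn t (fun j' => h i' j' i j))
    + avgOn s (fun i' => avgOn s (fun k' => h i' j k' j))
    + avgOn s (fun i' => avgOn t (fun l' => h i' j i l'))
    + avgOn t (fun j' => avgOn s (fun k' => h i j' k' j))
    + avgOn t (fun j' => avgOn t (fun l' => h i j' i l'))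
    + avgOn s (fun k' => avgOn t (fun l' => h i j k' l'))
    - avgOn s (fun i' => avgOn t (fun j' => avgOn s (fun k' => h i' j' k' j)))
    - avgOn s (fun i' => avgOn t (fun j' => avgOn t (fun l' => h i' j' i l')))
    - avgOn s (fun i' => avgOn s (fun k' => avgOn t (fun l' => h i' j k' l')))
    - avgOn t (fun j' => avgOn s (fun k' => avgOn t (fun l' => h i j' k' l')))
    + avgOn s (fun i' => avgOn t (fun j' =>
        avgOn s (fun k' => avgOn t (fun l' => h i' j' k' l')))))
    = ∑ i ∈ s, ∑ j ∈ t, h i j i j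
      - (∑ a ∈ s, ∑ b ∈ s, ∑ j ∈ t, h a j b j) / (s.card : ℝ)
      - (∑ i ∈ s, ∑ a ∈ t, ∑ b ∈ t, h i a i b) / (t.card : ℝ)
      + (∑ a ∈ s, ∑ b ∈ s, ∑ c ∈ t, ∑ e ∈ t, h a c b e) / ((s.card : ℝ) * (t.card : ℝ)) := by
  have hs0 : (s.card : ℝ) ≠ 0 := by exact_mod_cast hs.card_pos.ne'
  have ht0 : (t.card : ℝ) ≠ 0 := by exact_mod_cast ht.card_pos.ne'
  simp only [avgOn, div_eq_mul_inv, Finset.sum_add_distrib, Finset.sum_sub_distrib,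
    ← Finset.sum_mul, Finset.sum_const, nsmul_eq_mul, ← Finset.mul_sum]
  have s1 : ∑ i ∈ s, ∑ j ∈ t, ∑ a ∈ s, h a j i j = ∑ a ∈ s, ∑ b ∈ s, ∑ j ∈ t, h a j b j := by
    rw [Finset.sum_comm (s := s) (t := s)]
    exact Finset.sum_congr rfl fun _ _ => Finset.sum_comm
  have s3 : ∑ i ∈ s, ∑ j ∈ t, ∑ b ∈ s, h i j b j = ∑ a ∈ s, ∑ b ∈ s, ∑ j ∈ t, h a j b j :=
    Finset.sum_congr rfl fun _ _ => Finset.sum_comm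
  have s13 : ∑ j ∈ t, ∑ a ∈ s, ∑ b ∈ s, h a j b j = ∑ a ∈ s, ∑ b ∈ s, ∑ j ∈ t, h a j b j := by
    rw [Finset.sum_comm]
    exact Finset.sum_congr rfl fun _ _ => Finset.sum_comm
  have s2 : ∑ i ∈ s, ∑ j ∈ t, ∑ a ∈ t, h i a i j = ∑ i ∈ s, ∑ a ∈ t, ∑ b ∈ t, h i a i b :=
    Finset.sum_congr rfl fun _ _ => Finset.sum_comm
  have s1234 : ∑ a ∈ s, ∑ c ∈ t, ∑ b ∈ s, ∑ e ∈ t, h a c b e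
      = ∑ a ∈ s, ∑ b ∈ s, ∑ c ∈ t, ∑ e ∈ t, h a c b e :=
    Finset.sum_congr rfl fun _ _ => Finset.sum_comm
  have s12 : ∑ i ∈ s, ∑ j ∈ t, ∑ a ∈ s, ∑ c ∈ t, h a c i j
      = ∑ a ∈ s, ∑ b ∈ s, ∑ c ∈ t, ∑ e ∈ t, h a c b e := by
    rw [Finset.sum_comm (s := s) (t := s)]
    refine Finset.sum_congr rfl fun _ _ => ?_
    rw [Finset.sum_comm]
    refine Finset.sum_congr rfl fun _ _ => ?_
    rw [Finset.sum_comm]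
  have s14 : ∑ i ∈ s, ∑ j ∈ t, ∑ a ∈ s, ∑ e ∈ t, h a j i e
      = ∑ a ∈ s, ∑ b ∈ s, ∑ c ∈ t, ∑ e ∈ t, h a c b e := by
    rw [Finset.sum_comm (s := s) (t := s)]
    refine Finset.sum_congr rfl fun _ _ => ?_
    rw [Finset.sum_comm]
  have s23 : ∑ i ∈ s, ∑ j ∈ t, ∑ c ∈ t, ∑ b ∈ s, h i c b j
      = ∑ a ∈ s, ∑ b ∈ s, ∑ c ∈ t, ∑ e ∈ t, h a c b e := by
    refine Finset.sum_congr rfl fun _ _ => ?_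
    rw [Finset.sum_comm, Finset.sum_comm (s := s) (t := t)]
    refine Finset.sum_congr rfl fun _ _ => ?_
    rw [Finset.sum_comm]
  have s123 : ∑ j ∈ t, ∑ a ∈ s, ∑ c ∈ t, ∑ b ∈ s, h a c b j
      = ∑ a ∈ s, ∑ b ∈ s, ∑ c ∈ t, ∑ e ∈ t, h a c b e := by
    rw [Finset.sum_comm]
    exact s23
  have s124 : ∑ i ∈ s, ∑ a ∈ s, ∑ c ∈ t, ∑ e ∈ t, h a c i e
      = ∑ a ∈ s, ∑ b ∈ s, ∑ c ∈ t, ∑ e ∈ t, h a c b e := Finset.sum_comm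
  have s134 : ∑ j ∈ t, ∑ a ∈ s, ∑ b ∈ s, ∑ e ∈ t, h a j b e
      = ∑ a ∈ s, ∑ b ∈ s, ∑ c ∈ t, ∑ e ∈ t, h a c b e := by
    rw [Finset.sum_comm]
    exact s1234
  rw [s1, s2, s3, s12, s13, s14, s23, s123, s124, s134, s1234]
  field_simp
  ring

lemma cd_tilde {N : ℕ} (d : Fin N → Fin N → Fin N → Fin N → ℝ) (I J : Finset (Fin N))
    (f g : Fin N → Fin N)
    (hf : Set.BijOn f (I : Set (Fin N)) (J : Set (Fin N)))
    (hg : Set.BijOn g ((Iᶜ : Finset (Fin N)) : Set (Fin N)) ((Jᶜ : Finset (Fin N)) : Set (Fin N)))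
    (hI : I.Nonempty) (hIc : Iᶜ.Nonempty) :
    ∑ i ∈ I, ∑ j ∈ Iᶜ, tildeD d I J i j (f i) (g j)
    = ∑ i ∈ I, ∑ j ∈ Iᶜ, d i j (f i) (g j)
      - (∑ a ∈ I, ∑ b ∈ I, ∑ j ∈ Iᶜ, d a j (f b) (g j)) / (I.card : ℝ)
      - (∑ i ∈ I, ∑ a ∈ Iᶜ, ∑ b ∈ Iᶜ, d i a (f i) (g b)) / (Iᶜ.card : ℝ)
      + (∑ a ∈ I, ∑ b ∈ I, ∑ c ∈ Iᶜ, ∑ e ∈ Iᶜ, d a c (f b) (g e))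
          / ((I.card : ℝ) * (Iᶜ.card : ℝ)) := by
  rw [← cd_tilde_aux I Iᶜ hI hIc (fun i j k l => d i j (f k) (g l))]
  refine Finset.sum_congr rfl fun i _ => Finset.sum_congr rfl fun j _ => ?_
  unfold tildeD
  simp only [cd_avg_bij hf, cd_avg_bij hg]

lemma cd_cnt {N : ℕ} (n : ℕ) (A B : Finset (Fin N)) (hA : A.card ≤ n) :
    (∑ I ∈ Finset.powersetCard n (Finset.univ : Finset (Fin N)),
      if A ⊆ I ∧ Disjoint B I then (1:ℝ) else 0)
    = if Disjoint A B then (((N - A.card - B.card).choose (n - A.card) : ℕ) : ℝ) else 0 := by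
  split_ifs with hd
  · rw [Finset.sum_boole]
    congr 1
    have hc : (((A ∪ B)ᶜ : Finset (Fin N))).card = N - A.card - B.card := by
      rw [Finset.card_compl, Fintype.card_fin, Finset.card_union_of_disjoint hd]; omega
    rw [← hc, ← Finset.card_powersetCard]
    refine Finset.card_bij' (fun I _ => I \ A) (fun K _ => K ∪ A) ?_ ?_ ?_ ?_
    · intro I hI
      simp only [Finset.mem_filter, Finset.mem_powersetCard, Finset.subset_univ, true_and] at hI ⊢
      obtain ⟨hI1, hI2, hI3⟩ := hI
      refine ⟨?_, ?_⟩
      · intro x hx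
        simp only [Finset.mem_sdiff, Finset.mem_compl, Finset.mem_union] at hx ⊢
        rintro (h | h)
        · exact hx.2 h
        · exact (Finset.disjoint_left.mp hI3 h) hx.1
      · rw [Finset.card_sdiff_of_subset hI2, hI1]
    · intro K hK
      simp only [Finset.mem_filter, Finset.mem_powersetCard, Finset.subset_univ, true_and] at hK ⊢
      obtain ⟨hK1, hK2⟩ := hK
      have h1 : Disjoint K A := by
        rw [Finset.disjoint_left]; intro x hx hxA
        have := hK1 hx
        simp [hxA] at this
      have h2 : Disjoint B K := by
        rw [Finset.disjoint_right]; intro x hx hxA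
        have := hK1 hx
        simp [hxA] at this
      refine ⟨?_, Finset.subset_union_right, ?_⟩
      · rw [Finset.card_union_of_disjoint h1, hK2]; omega
      · rw [Finset.disjoint_union_right]; exact ⟨h2, hd.symm⟩
    · intro I hI
      simp only [Finset.mem_filter] at hI
      exact Finset.sdiff_union_of_subset hI.2.1
    · intro K hK
      simp only [Finset.mem_powersetCard] at hK
      have h1 : Disjoint K A := by
        rw [Finset.disjoint_left]; intro x hx hxA
        have := hK.1 hx
        simp [hxA] at this
      exact Finset.union_sdiff_cancel_right h1
  · apply Finset.sum_eq_zero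
    intro I _
    rw [if_neg]
    rintro ⟨h1, h2⟩
    exact hd ((h2.mono_right h1).symm)

/-- number of `I` with `i, i' ∈ I` and `j, j' ∉ I`. -/
lemma cd_swapI {N : ℕ} (n : ℕ) (F : Fin N → Fin N → Fin N → Fin N → ℝ) :
    (∑ I ∈ Finset.powersetCard n (Finset.univ : Finset (Fin N)),
      ∑ a ∈ I, ∑ b ∈ I, ∑ c ∈ Iᶜ, ∑ e ∈ Iᶜ, F a b c e)
    = ∑ a, ∑ b, ∑ c, ∑ e, F a b c e *
      (∑ I ∈ Finset.powersetCard n (Finset.univ : Finset (Fin N)),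
      if ({a, b} : Finset (Fin N)) ⊆ I ∧ Disjoint {c, e} I then (1:ℝ) else 0) := by
  have : ∀ I : Finset (Fin N), ∑ a ∈ I, ∑ b ∈ I, ∑ c ∈ Iᶜ, ∑ e ∈ Iᶜ, F a b c e
      = ∑ a, ∑ b, ∑ c, ∑ e, F a b c e *
        (if ({a, b} : Finset (Fin N)) ⊆ I ∧ Disjoint {c, e} I then (1:ℝ) else 0) := by
    intro I
    have key : ∀ (s : Finset (Fin N)) (f : Fin N → ℝ), ∑ x ∈ s, f x = ∑ x, if x ∈ s then f x else 0 := by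
      intro s f; simp
    rw [key]
    refine Finset.sum_congr rfl fun a _ => ?_
    by_cases ha : a ∈ I
    swap
    · simp [ha, Finset.insert_subset_iff]
    rw [if_pos ha, key]
    refine Finset.sum_congr rfl fun b _ => ?_
    by_cases hb : b ∈ I
    swap
    · simp [hb, Finset.insert_subset_iff]
    rw [if_pos hb, key]
    refine Finset.sum_congr rfl fun c _ => ?_
    by_cases hc : c ∈ I
    · simp [hc]
    rw [if_pos (by simpa using hc), key]
    refine Finset.sum_congr rfl fun e _ => ?_
    by_cases he : e ∈ I
    · simp [he]
    · simp [ha, hb, hc, he, Finset.insert_subset_iff]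
  simp only [this]
  rw [Finset.sum_comm]; refine Finset.sum_congr rfl fun a _ => ?_
  rw [Finset.sum_comm]; refine Finset.sum_congr rfl fun b _ => ?_
  rw [Finset.sum_comm]; refine Finset.sum_congr rfl fun c _ => ?_
  rw [Finset.sum_comm]; refine Finset.sum_congr rfl fun e _ => ?_
  rw [Finset.mul_sum]

lemma cd_poly {N : ℕ} (n : ℕ) (hn : 2 ≤ n) (q11 q12 q21 q22 : ℝ)
    (h11 : q11 = (((N - 2).choose (n - 1) : ℕ) : ℝ))
    (h12 : q12 = (((N - 3).choose (n - 1) : ℕ) : ℝ))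
    (h21 : q21 = (((N - 3).choose (n - 2) : ℕ) : ℝ))
    (h22 : q22 = (((N - 4).choose (n - 2) : ℕ) : ℝ)) (a b c e : Fin N) :
    (∑ I ∈ Finset.powersetCard n (Finset.univ : Finset (Fin N)),
      if ({a, b} : Finset (Fin N)) ⊆ I ∧ Disjoint {c, e} I then (1:ℝ) else 0)
    = q22 + (q12 - q22) * (if a = b then 1 else 0) + (q21 - q22) * (if c = e then 1 else 0)
      - q22 * (if a = c then 1 else 0) - q22 * (if a = e then 1 else 0)
      - q22 * (if b = c then 1 else 0) - q22 * (if b = e then 1 else 0)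
      + (2 * q22 - q12) * (if a = b ∧ a = c then 1 else 0)
      + (2 * q22 - q12) * (if a = b ∧ a = e then 1 else 0)
      + (2 * q22 - q21) * (if a = c ∧ a = e then 1 else 0)
      + (2 * q22 - q21) * (if b = c ∧ b = e then 1 else 0)
      + (q11 - q12 - q21 + q22) * (if a = b ∧ c = e then 1 else 0)
      + q22 * (if a = c ∧ b = e then 1 else 0)
      + q22 * (if a = e ∧ b = c then 1 else 0)
      + (-q11 + 2 * q12 + 2 * q21 - 6 * q22) * (if a = b ∧ a = c ∧ a = e then 1 else 0) := by
  have cab : ∀ x y : Fin N, ({x, y} : Finset (Fin N)).card = if x = y then 1 else 2 := by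
    intro x y; split_ifs with h
    · subst h; simp
    · exact Finset.card_pair h
  have hA : ({a, b} : Finset (Fin N)).card ≤ n := by rw [cab]; split_ifs <;> omega
  rw [cd_cnt n {a,b} {c,e} hA]
  have hd : Disjoint ({a, b} : Finset (Fin N)) {c, e} ↔ (a ≠ c ∧ a ≠ e ∧ b ≠ c ∧ b ≠ e) := by
    simp [Finset.disjoint_left]; tauto
  rw [cab, cab]
  simp only [hd]
  have e11 : N - 1 - 1 = N - 2 := by omega
  have e12 : N - 1 - 2 = N - 3 := by omega
  have e21 : N - 2 - 1 = N - 3 := by omega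
  have e22 : N - 2 - 2 = N - 4 := by omega
  by_cases hab : a = b
  · subst hab
    by_cases hce : c = e
    · subst hce
      by_cases hac : a = c
      · subst hac; simp; ring
      · simp [hac, e11, ← h11]; ring
    · by_cases hac : a = c
      · subst hac; simp [hce]; ring
      · by_cases hae : a = e
        · subst hae; simp [hce, hac]; ring
        · simp [hac, hae, hce, e12, ← h12]
  · by_cases hce : c = e
    · subst hce
      by_cases hac : a = c
      · subst hac; simp [hab, Ne.symm hab]; ring
      · by_cases hbc : b = c
        · subst hbc; simp [hab, hac]; ring
        · simp [hab, hac, hbc, e21, ← h21]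
    · by_cases hac : a = c
      · subst hac
        by_cases hbe : b = e
        · subst hbe; simp [hab, Ne.symm hab]
        · simp [hab, Ne.symm hab, hbe, hce]
      · by_cases hae : a = e
        · subst hae
          by_cases hbc : b = c
          · subst hbc; simp [hab, Ne.symm hab]
          · simp [hab, Ne.symm hab, hbc, hce, hac]
        · by_cases hbc : b = c
          · subst hbc; simp [hab, hac, hae, hce]
          · by_cases hbe : b = e
            · subst hbe; simp [hab, hac, hae, hce, hbc]
            · simp [hab, hac, hae, hbc, hbe, hce, e22, ← h22]

lemma cd_E3 {N : ℕ} (n : ℕ) (hn : 2 ≤ n) (q11 q12 q21 q22 : ℝ)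
    (h11 : q11 = (((N - 2).choose (n - 1) : ℕ) : ℝ))
    (h12 : q12 = (((N - 3).choose (n - 1) : ℕ) : ℝ))
    (h21 : q21 = (((N - 3).choose (n - 2) : ℕ) : ℝ))
    (h22 : q22 = (((N - 4).choose (n - 2) : ℕ) : ℝ))
    (h : Fin N → Fin N → Fin N → Fin N → ℝ)
    (hd1 : ∀ i j k, ∑ l, h i j k l = 0)
    (hd2 : ∀ i j l, ∑ k, h i j k l = 0)
    (hd3 : ∀ i k l, ∑ j, h i j k l = 0)
    (hd4 : ∀ j k l, ∑ i, h i j k l = 0) :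
    (∑ I ∈ Finset.powersetCard n (Finset.univ : Finset (Fin N)),
      ∑ a ∈ I, ∑ b ∈ I, ∑ c ∈ Iᶜ, ∑ e ∈ Iᶜ, h a c b e)
    = (q11 - q12 - q21 + q22) * (∑ i, ∑ j, h i j i j) + q22 * (∑ i, ∑ j, h i i j j)
      + q22 * (∑ i, ∑ j, h i j j i)
      + (-q11 + 2 * q12 + 2 * q21 - 6 * q22) * ∑ i, h i i i i := by
  rw [cd_swapI n (fun a b c e => h a c b e)]
  simp only [cd_poly n hn q11 q12 q21 q22 h11 h12 h21 h22]
  have z4 : ∀ g : Fin N → Fin N → Fin N → ℝ,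
      ∑ a, ∑ b, ∑ c, ∑ e, h a c b e * g a b c = 0 := by
    intro g; simp [← Finset.sum_mul, hd1]
  have z3 : ∀ g : Fin N → Fin N → Fin N → ℝ,
      ∑ a, ∑ b, ∑ c, ∑ e, h a c b e * g a b e = 0 := by
    intro g
    refine Finset.sum_eq_zero fun a _ => Finset.sum_eq_zero fun b _ => ?_
    rw [Finset.sum_comm]; simp [← Finset.sum_mul, hd3]
  have z2 : ∀ g : Fin N → Fin N → Fin N → ℝ,
      ∑ a, ∑ b, ∑ c, ∑ e, h a c b e * g a c e = 0 := by
    intro g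
    refine Finset.sum_eq_zero fun a _ => ?_
    rw [Finset.sum_comm]
    refine Finset.sum_eq_zero fun c _ => ?_
    rw [Finset.sum_comm]; simp [← Finset.sum_mul, hd2]
  have z1 : ∀ g : Fin N → Fin N → Fin N → ℝ,
      ∑ a, ∑ b, ∑ c, ∑ e, h a c b e * g b c e = 0 := by
    intro g
    rw [Finset.sum_comm]
    refine Finset.sum_eq_zero fun b _ => ?_
    rw [Finset.sum_comm]
    refine Finset.sum_eq_zero fun c _ => ?_
    rw [Finset.sum_comm]; simp [← Finset.sum_mul, hd4]
  simp only [mul_add, mul_sub, Finset.sum_add_distrib, Finset.sum_sub_distrib]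
  have t1 : ∀ C : ℝ, ∑ a, ∑ b, ∑ c, ∑ e, h a c b e * (C * (if a = b ∧ c = e then 1 else 0))
      = C * ∑ i, ∑ j, h i j i j := by
    intro C
    simp only [ite_and, mul_ite, mul_zero, Finset.sum_ite_eq, Finset.sum_ite_irrel,
      Finset.sum_const_zero, Finset.mem_univ, if_true, Finset.mul_sum]
    exact Finset.sum_congr rfl fun _ _ => Finset.sum_congr rfl fun _ _ => by ring
  have t2 : ∀ C : ℝ, ∑ a, ∑ b, ∑ c, ∑ e, h a c b e * (C * (if a = c ∧ b = e then 1 else 0))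
      = C * ∑ i, ∑ j, h i i j j := by
    intro C
    simp only [ite_and, mul_ite, mul_zero, Finset.sum_ite_eq, Finset.sum_ite_irrel,
      Finset.sum_const_zero, Finset.mem_univ, if_true, Finset.mul_sum]
    exact Finset.sum_congr rfl fun _ _ => Finset.sum_congr rfl fun _ _ => by ring
  have t3 : ∀ C : ℝ, ∑ a, ∑ b, ∑ c, ∑ e, h a c b e * (C * (if a = e ∧ b = c then 1 else 0))
      = C * ∑ i, ∑ j, h i j j i := by
    intro C
    simp only [ite_and, mul_ite, mul_zero, Finset.sum_ite_eq, Finset.sum_ite_irrel,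
      Finset.sum_const_zero, Finset.mem_univ, if_true, Finset.mul_sum]
    exact Finset.sum_congr rfl fun _ _ => Finset.sum_congr rfl fun _ _ => by ring
  have t4 : ∀ C : ℝ, ∑ a, ∑ b, ∑ c, ∑ e, h a c b e * (C * (if a = b ∧ a = c ∧ a = e then 1 else 0))
      = C * ∑ i, h i i i i := by
    intro C
    simp only [ite_and, mul_ite, mul_zero, Finset.sum_ite_eq, Finset.sum_ite_irrel,
      Finset.sum_const_zero, Finset.mem_univ, if_true, Finset.mul_sum]
    exact Finset.sum_congr rfl fun _ _ => by ring
  rw [← t1, ← t2, ← t3, ← t4]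
  have y0 := z4 (fun a b c => q22)
  have y1 := z4 (fun a b c => (if a = b then 1 else 0))
  have y2 := z2 (fun a c e => (if c = e then 1 else 0))
  have y3 := z4 (fun a b c => (if a = c then 1 else 0))
  have y4 := z3 (fun a b e => (if a = e then 1 else 0))
  have y5 := z4 (fun a b c => (if b = c then 1 else 0))
  have y6 := z3 (fun a b e => (if b = e then 1 else 0))
  have y7 := z4 (fun a b c => (if a = b ∧ a = c then 1 else 0))
  have y8 := z3 (fun a b e => (if a = b ∧ a = e then 1 else 0))
  have y9 := z2 (fun a c e => (if a = c ∧ a = e then 1 else 0))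
  have y10 := z1 (fun b c e => (if b = c ∧ b = e then 1 else 0))
  have pull : ∀ (C : ℝ) (g : Fin N → Fin N → Fin N → Fin N → ℝ),
      ∑ a, ∑ b, ∑ c, ∑ e, h a c b e * g a b c e = 0 →
      ∑ a, ∑ b, ∑ c, ∑ e, h a c b e * (C * g a b c e) = 0 := by
    intro C g hg
    simp only [mul_left_comm _ C, ← Finset.mul_sum, hg, mul_zero]
  rw [y0, pull _ _ y1, pull _ _ y2, pull _ _ y3, pull _ _ y4, pull _ _ y5, pull _ _ y6,
    pull _ _ y7, pull _ _ y8, pull _ _ y9, pull _ _ y10]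
  ring


lemma cd_E1 {N : ℕ} (n : ℕ) (hn : 2 ≤ n) (q11 q12 q21 q22 : ℝ)
    (h11 : q11 = (((N - 2).choose (n - 1) : ℕ) : ℝ))
    (h12 : q12 = (((N - 3).choose (n - 1) : ℕ) : ℝ))
    (h21 : q21 = (((N - 3).choose (n - 2) : ℕ) : ℝ))
    (h22 : q22 = (((N - 4).choose (n - 2) : ℕ) : ℝ))
    (h : Fin N → Fin N → Fin N → Fin N → ℝ)
    (hd2 : ∀ i j l, ∑ k, h i j k l = 0)
    (hd4 : ∀ j k l, ∑ i, h i j k l = 0) :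
    (∑ I ∈ Finset.powersetCard n (Finset.univ : Finset (Fin N)),
      ∑ a ∈ I, ∑ b ∈ I, ∑ c ∈ Iᶜ, h a c b c)
    = q21 * (∑ i, h i i i i) + (q11 - q21) * ((∑ i, ∑ j, h i j i j) - ∑ i, h i i i i) := by
  have e0 : (∑ I ∈ Finset.powersetCard n (Finset.univ : Finset (Fin N)),
      ∑ a ∈ I, ∑ b ∈ I, ∑ c ∈ Iᶜ, h a c b c)
      = ∑ I ∈ Finset.powersetCard n (Finset.univ : Finset (Fin N)),
      ∑ a ∈ I, ∑ b ∈ I, ∑ c ∈ Iᶜ, ∑ e ∈ Iᶜ, if c = e then h a c b c else 0 := by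
    refine Finset.sum_congr rfl fun I _ => Finset.sum_congr rfl fun a _ =>
      Finset.sum_congr rfl fun b _ => Finset.sum_congr rfl fun c hc => ?_
    simp only [Finset.sum_ite_eq, hc, if_true]
  rw [e0, cd_swapI n (fun a b c e => if c = e then h a c b c else 0)]
  have e1 : ∀ a b c : Fin N, ∑ e, ((if c = e then h a c b c else 0) *
      ∑ I ∈ Finset.powersetCard n (Finset.univ : Finset (Fin N)),
      if ({a, b} : Finset (Fin N)) ⊆ I ∧ Disjoint {c, e} I then (1:ℝ) else 0)
      = h a c b c * q21 + h a c b c * ((q11 - q21) * (if a = b then 1 else 0))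
       - h a c b c * (q21 * (if a = c then 1 else 0))
       - h a c b c * (q21 * (if b = c then 1 else 0))
       + h a c b c * ((2 * q21 - q11) * (if a = b ∧ a = c then 1 else 0)) := by
    intro a b c
    simp only [ite_mul, zero_mul, Finset.sum_ite_eq, Finset.mem_univ, if_true]
    rw [cd_poly n hn q11 q12 q21 q22 h11 h12 h21 h22]
    by_cases hab : a = b
    · subst hab
      by_cases hac : a = c
      · subst hac; simp <;> ring_nf <;> simp
      · simp [hac] <;> ring_nf <;> simp
    · by_cases hac : a = c
      · subst hac; simp [hab, Ne.symm hab] <;> ring_nf <;> simp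
      · by_cases hbc : b = c
        · subst hbc; simp [hab] <;> ring_nf <;> simp
        · simp [hab, hac, hbc]
  simp only [e1, Finset.sum_add_distrib, Finset.sum_sub_distrib]
  have y0 : ∑ a, ∑ b, ∑ c, h a c b c * q21 = 0 := by
    refine Finset.sum_eq_zero fun a _ => ?_
    rw [Finset.sum_comm]; simp [← Finset.sum_mul, hd2]
  have y1 : ∀ C : ℝ, ∑ a, ∑ b, ∑ c, h a c b c * (C * (if a = b then 1 else 0))
      = C * ∑ i, ∑ j, h i j i j := by
    intro C
    simp only [ite_and, mul_ite, mul_zero, Finset.sum_ite_eq, Finset.sum_ite_irrel,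
      Finset.sum_const_zero, Finset.mem_univ, if_true, Finset.mul_sum]
    exact Finset.sum_congr rfl fun _ _ => Finset.sum_congr rfl fun _ _ => by ring
  have y2 : ∀ C : ℝ, ∑ a, ∑ b, ∑ c, h a c b c * (C * (if a = c then 1 else 0)) = 0 := by
    intro C
    simp only [mul_ite, mul_zero, Finset.sum_ite_eq, Finset.mem_univ, if_true, ← Finset.sum_mul, hd2]
    simp
  have y3 : ∀ C : ℝ, ∑ a, ∑ b, ∑ c, h a c b c * (C * (if b = c then 1 else 0)) = 0 := by
    intro C
    rw [Finset.sum_comm]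
    simp only [mul_ite, mul_zero, Finset.sum_ite_eq, Finset.mem_univ, if_true, ← Finset.sum_mul, hd4]
    simp
  have y4 : ∀ C : ℝ, ∑ a, ∑ b, ∑ c, h a c b c * (C * (if a = b ∧ a = c then 1 else 0))
      = C * ∑ i, h i i i i := by
    intro C
    simp only [ite_and, mul_ite, mul_zero, Finset.sum_ite_eq, Finset.sum_ite_irrel,
      Finset.sum_const_zero, Finset.mem_univ, if_true, Finset.mul_sum]
    exact Finset.sum_congr rfl fun _ _ => by ring
  rw [y0, y1, y2, y3, y4]
  ring

lemma cd_E2 {N : ℕ} (n : ℕ) (hn : 2 ≤ n) (q11 q12 q21 q22 : ℝ)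
    (h11 : q11 = (((N - 2).choose (n - 1) : ℕ) : ℝ))
    (h12 : q12 = (((N - 3).choose (n - 1) : ℕ) : ℝ))
    (h21 : q21 = (((N - 3).choose (n - 2) : ℕ) : ℝ))
    (h22 : q22 = (((N - 4).choose (n - 2) : ℕ) : ℝ))
    (h : Fin N → Fin N → Fin N → Fin N → ℝ)
    (hd1 : ∀ i j k, ∑ l, h i j k l = 0)
    (hd3 : ∀ i k l, ∑ j, h i j k l = 0) :
    (∑ I ∈ Finset.powersetCard n (Finset.univ : Finset (Fin N)),
      ∑ a ∈ I, ∑ c ∈ Iᶜ, ∑ e ∈ Iᶜ, h a c a e)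
    = q12 * (∑ i, h i i i i) + (q11 - q12) * ((∑ i, ∑ j, h i j i j) - ∑ i, h i i i i) := by
  have e0 : (∑ I ∈ Finset.powersetCard n (Finset.univ : Finset (Fin N)),
      ∑ a ∈ I, ∑ c ∈ Iᶜ, ∑ e ∈ Iᶜ, h a c a e)
      = ∑ I ∈ Finset.powersetCard n (Finset.univ : Finset (Fin N)),
      ∑ a ∈ I, ∑ b ∈ I, ∑ c ∈ Iᶜ, ∑ e ∈ Iᶜ, if a = b then h a c a e else 0 := by
    refine Finset.sum_congr rfl fun I _ => Finset.sum_congr rfl fun a ha => ?_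
    simp only [Finset.sum_ite_irrel, Finset.sum_const_zero, Finset.sum_ite_eq, ha, if_true]
  rw [e0, cd_swapI n (fun a b c e => if a = b then h a c a e else 0)]
  have e1 : ∀ a : Fin N, ∑ b, ∑ c, ∑ e, ((if a = b then h a c a e else 0) *
      ∑ I ∈ Finset.powersetCard n (Finset.univ : Finset (Fin N)),
      if ({a, b} : Finset (Fin N)) ⊆ I ∧ Disjoint {c, e} I then (1:ℝ) else 0)
      = ∑ c, ∑ e, (h a c a e * q12 + h a c a e * ((q11 - q12) * (if c = e then 1 else 0))
       - h a c a e * (q12 * (if a = c then 1 else 0))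
       - h a c a e * (q12 * (if a = e then 1 else 0))
       + h a c a e * ((2 * q12 - q11) * (if a = c ∧ a = e then 1 else 0))) := by
    intro a
    simp only [ite_mul, zero_mul, Finset.sum_ite_irrel, Finset.sum_const_zero,
      Finset.sum_ite_eq, Finset.mem_univ, if_true]
    refine Finset.sum_congr rfl fun c _ => Finset.sum_congr rfl fun e _ => ?_
    rw [cd_poly n hn q11 q12 q21 q22 h11 h12 h21 h22]
    by_cases hce : c = e
    · subst hce
      by_cases hac : a = c
      · subst hac; simp <;> ring_nf <;> simp
      · simp [hac] <;> ring_nf <;> simp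
    · by_cases hac : a = c
      · subst hac; simp [hce] <;> ring_nf <;> simp
      · by_cases hae : a = e
        · subst hae; simp [hce, hac] <;> ring_nf <;> simp
        · simp [hce, hac, hae]
  simp only [e1, Finset.sum_add_distrib, Finset.sum_sub_distrib]
  have y0 : ∑ a, ∑ c, ∑ e, h a c a e * q12 = 0 := by
    simp [← Finset.sum_mul, hd1]
  have y1 : ∀ C : ℝ, ∑ a, ∑ c, ∑ e, h a c a e * (C * (if c = e then 1 else 0))
      = C * ∑ i, ∑ j, h i j i j := by
    intro C
    simp only [ite_and, mul_ite, mul_zero, Finset.sum_ite_eq, Finset.sum_ite_irrel,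
      Finset.sum_const_zero, Finset.mem_univ, if_true, Finset.mul_sum]
    exact Finset.sum_congr rfl fun _ _ => Finset.sum_congr rfl fun _ _ => by ring
  have y2 : ∀ C : ℝ, ∑ a, ∑ c, ∑ e, h a c a e * (C * (if a = c then 1 else 0)) = 0 := by
    intro C
    simp [← Finset.sum_mul, hd1]
  have y3 : ∀ C : ℝ, ∑ a, ∑ c, ∑ e, h a c a e * (C * (if a = e then 1 else 0)) = 0 := by
    intro C
    refine Finset.sum_eq_zero fun a _ => ?_
    rw [Finset.sum_comm]
    simp [← Finset.sum_mul, hd3]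
  have y4 : ∀ C : ℝ, ∑ a, ∑ c, ∑ e, h a c a e * (C * (if a = c ∧ a = e then 1 else 0))
      = C * ∑ i, h i i i i := by
    intro C
    simp only [ite_and, mul_ite, mul_zero, Finset.sum_ite_eq, Finset.sum_ite_irrel,
      Finset.sum_const_zero, Finset.mem_univ, if_true, Finset.mul_sum]
    exact Finset.sum_congr rfl fun _ _ => by ring
  rw [y0, y1, y2, y3, y4]
  ring

lemma cd_E0 {N : ℕ} (n : ℕ) (hn : 2 ≤ n) (q11 : ℝ)
    (h11 : q11 = (((N - 2).choose (n - 1) : ℕ) : ℝ))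
    (h : Fin N → Fin N → Fin N → Fin N → ℝ) :
    (∑ I ∈ Finset.powersetCard n (Finset.univ : Finset (Fin N)),
      ∑ a ∈ I, ∑ c ∈ Iᶜ, h a c a c)
    = q11 * ((∑ i, ∑ j, h i j i j) - ∑ i, h i i i i) := by
  have e0 : (∑ I ∈ Finset.powersetCard n (Finset.univ : Finset (Fin N)),
      ∑ a ∈ I, ∑ c ∈ Iᶜ, h a c a c)
      = ∑ I ∈ Finset.powersetCard n (Finset.univ : Finset (Fin N)),
      ∑ a ∈ I, ∑ b ∈ I, ∑ c ∈ Iᶜ, ∑ e ∈ Iᶜ, if a = b then (if c = e then h a c a c else 0) else 0 := by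
    refine Finset.sum_congr rfl fun I _ => Finset.sum_congr rfl fun a ha => ?_
    simp only [Finset.sum_ite_irrel, Finset.sum_const_zero, Finset.sum_ite_eq, ha, if_true]
    refine Finset.sum_congr rfl fun c hc => ?_
    simp only [hc, if_true]
  rw [e0, cd_swapI n (fun a b c e => if a = b then (if c = e then h a c a c else 0) else 0)]
  have e1 : ∀ a : Fin N, ∑ b, ∑ c, ∑ e, ((if a = b then (if c = e then h a c a c else 0) else 0) *
      ∑ I ∈ Finset.powersetCard n (Finset.univ : Finset (Fin N)),
      if ({a, b} : Finset (Fin N)) ⊆ I ∧ Disjoint {c, e} I then (1:ℝ) else 0)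
      = ∑ c, (h a c a c * q11 - h a c a c * (q11 * (if a = c then 1 else 0))) := by
    intro a
    simp only [ite_mul, zero_mul, Finset.sum_ite_irrel, Finset.sum_const_zero,
      Finset.sum_ite_eq, Finset.mem_univ, if_true]
    refine Finset.sum_congr rfl fun c _ => ?_
    rw [cd_poly n hn q11 _ _ _ h11 rfl rfl rfl]
    by_cases hac : a = c
    · subst hac; simp <;> ring_nf <;> simp
    · simp [hac] <;> ring_nf <;> simp
  simp only [e1, Finset.sum_sub_distrib, ← Finset.sum_mul]
  simp only [mul_ite, mul_zero, Finset.sum_ite_eq, Finset.mem_univ, if_true, ← Finset.sum_mul, mul_one]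
  ring

lemma cd_T_card {N : ℕ} (I J J' : Finset (Fin N)) (hJ : J.card = J'.card) :
    (Finset.univ.filter (fun σ : Equiv.Perm (Fin N) => I.image σ = J)).card
      = (Finset.univ.filter (fun σ : Equiv.Perm (Fin N) => I.image σ = J')).card := by
  have e : {x // x ∈ J} ≃ {x // x ∈ J'} := Finset.equivOfCardEq hJ
  obtain ⟨τ, hτ⟩ : ∃ τ : Equiv.Perm (Fin N), J.image τ = J' := by
    refine ⟨e.extendSubtype, ?_⟩
    apply Finset.eq_of_subset_of_card_le
    · intro y hy
      obtain ⟨x, hx, rfl⟩ := Finset.mem_image.mp hy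
      exact e.extendSubtype_mem x hx
    · rw [Finset.card_image_of_injective _ (Equiv.injective _), hJ]
  have hτ' : J'.image (τ⁻¹ : Equiv.Perm (Fin N)) = J := by
    rw [← hτ, Finset.image_image]
    have : ((τ⁻¹ : Equiv.Perm (Fin N)) : Fin N → Fin N) ∘ τ = id := by ext x; simp
    rw [this, Finset.image_id]
  refine Finset.card_bij' (fun σ _ => τ * σ) (fun σ _ => τ⁻¹ * σ) ?_ ?_ ?_ ?_
  · intro σ hσ
    simp only [Finset.mem_filter, Finset.mem_univ, true_and] at hσ ⊢
    rw [Equiv.Perm.coe_mul, ← Finset.image_image, hσ, hτ]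
  · intro σ hσ
    simp only [Finset.mem_filter, Finset.mem_univ, true_and] at hσ ⊢
    rw [Equiv.Perm.coe_mul, ← Finset.image_image, hσ, hτ']
  · intro σ _; simp
  · intro σ _; simp

lemma cd_agree_card {N : ℕ} (I : Finset (Fin N)) (p : Fin N → Fin N) :
    (Finset.univ.filter (fun f : Fin N → Fin N => ∀ x ∈ I, f x = p x)).card = N ^ (Iᶜ.card) := by
  have : Finset.univ.filter (fun f : Fin N → Fin N => ∀ x ∈ I, f x = p x)
      = Fintype.piFinset (fun x => if x ∈ I then {p x} else (Finset.univ : Finset (Fin N))) := by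
    ext f
    simp only [Finset.mem_filter, Finset.mem_univ, true_and, Fintype.mem_piFinset]
    constructor
    · intro h x
      by_cases hx : x ∈ I <;> simp [hx]
      exact h x hx
    · intro h x hx
      have := h x
      simpa [hx] using this
  rw [this, Fintype.card_piFinset]
  have h2 : ∀ x : Fin N, (if x ∈ I then {p x} else (Finset.univ : Finset (Fin N))).card
      = if x ∈ Iᶜ then N else 1 := by
    intro x; by_cases hx : x ∈ I <;> simp [hx]
  simp only [h2]
  rw [Finset.prod_ite_mem]
  simp

lemma cd_fiber {N : ℕ} (I J : Finset (Fin N))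
    (Ψ : (Fin N → Fin N) → (Fin N → Fin N) → ℝ)
    (hΨ : ∀ f g f' g', (∀ x ∈ I, f x = f' x) → (∀ x ∈ Iᶜ, g x = g' x) → Ψ f g = Ψ f' g') :
    ∑ f ∈ bijSet I J, ∑ g ∈ bijSet Iᶜ Jᶜ, Ψ f g
      = ((N : ℝ) ^ Iᶜ.card * (N : ℝ) ^ Iᶜᶜ.card) *
        ∑ σ ∈ Finset.univ.filter (fun σ : Equiv.Perm (Fin N) => I.image σ = J), Ψ σ σ := by
  set T := Finset.univ.filter (fun σ : Equiv.Perm (Fin N) => I.image σ = J) with hT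
  have h1 : ∀ f ∈ bijSet I J, ∀ g ∈ bijSet Iᶜ Jᶜ,
      Ψ f g = ∑ σ ∈ T, if (∀ x ∈ I, f x = σ x) ∧ (∀ x ∈ Iᶜ, g x = σ x) then Ψ f g else 0 := by
    intro f hf g hg
    simp only [bijSet, Finset.mem_filter, Finset.mem_univ, true_and] at hf hg
    have hinj : Function.Injective (fun x => if x ∈ I then f x else g x) := by
      intro x y hxy
      by_cases hx : x ∈ I <;> by_cases hy : y ∈ I <;> simp only [hx, hy, if_true, if_false] at hxy
      · exact hf.injOn hx hy hxy
      · have a := hf.mapsTo hx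
        have b := hg.mapsTo (show y ∈ ((Iᶜ : Finset (Fin N)) : Set (Fin N)) by simpa using hy)
        rw [hxy] at a
        exact absurd a (by simpa using b)
      · have a := hf.mapsTo hy
        have b := hg.mapsTo (show x ∈ ((Iᶜ : Finset (Fin N)) : Set (Fin N)) by simpa using hx)
        rw [← hxy] at a
        exact absurd a (by simpa using b)
      · exact hg.injOn (by simpa using hx) (by simpa using hy) hxy
    let σ₀ : Equiv.Perm (Fin N) := Equiv.ofBijective _ (Finite.injective_iff_bijective.mp hinj)
    have hσ₀ : ∀ x, σ₀ x = if x ∈ I then f x else g x := fun x => rfl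
    rw [Finset.sum_eq_single σ₀]
    · rw [if_pos]
      refine ⟨fun x hx => by rw [hσ₀, if_pos hx], fun x hx => by
        rw [hσ₀, if_neg (by simpa using hx)]⟩
    · intro σ _ hne
      rw [if_neg]
      rintro ⟨ha, hb⟩
      apply hne
      ext x
      rw [hσ₀]
      by_cases hx : x ∈ I
      · rw [if_pos hx, ha x hx]
      · rw [if_neg hx, hb x (by simpa using hx)]
    · intro hnot
      exfalso; apply hnot
      simp only [hT, Finset.mem_filter, Finset.mem_univ, true_and]
      apply Finset.coe_injective
      rw [Finset.coe_image, ← hf.image_eq]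
      apply Set.image_congr
      intro x hx
      rw [hσ₀, if_pos (by simpa using hx)]
  have h2 : ∑ f ∈ bijSet I J, ∑ g ∈ bijSet Iᶜ Jᶜ, Ψ f g
      = ∑ σ ∈ T, ∑ f ∈ bijSet I J, ∑ g ∈ bijSet Iᶜ Jᶜ,
        if (∀ x ∈ I, f x = σ x) ∧ (∀ x ∈ Iᶜ, g x = σ x) then Ψ f g else 0 := by
    rw [Finset.sum_comm (s := T)]
    refine Finset.sum_congr rfl fun f hf => ?_
    rw [Finset.sum_comm (s := T)]
    exact Finset.sum_congr rfl fun g hg => h1 f hf g hg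
  rw [h2, Finset.mul_sum]
  refine Finset.sum_congr rfl fun σ hσ => ?_
  simp only [hT, Finset.mem_filter, Finset.mem_univ, true_and] at hσ
  have hbI : ∀ f : Fin N → Fin N, (∀ x ∈ I, f x = σ x) → f ∈ bijSet I J := by
    intro f hf
    simp only [bijSet, Finset.mem_filter, Finset.mem_univ, true_and]
    have : Set.BijOn σ (I : Set (Fin N)) (J : Set (Fin N)) := by
      rw [← hσ, Finset.coe_image]; exact σ.injective.injOn.bijOn_image
    exact this.congr fun x hx => (hf x hx).symm
  have hbIc : ∀ f : Fin N → Fin N, (∀ x ∈ Iᶜ, f x = σ x) → f ∈ bijSet Iᶜ Jᶜ := by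
    intro f hf
    simp only [bijSet, Finset.mem_filter, Finset.mem_univ, true_and]
    have : Set.BijOn σ ((Iᶜ : Finset (Fin N)) : Set (Fin N)) ((Jᶜ : Finset (Fin N)) : Set (Fin N)) := by
      rw [← hσ, Finset.coe_compl, Finset.coe_compl, Finset.coe_image,
        ← Set.image_compl_eq σ.bijective]
      exact σ.injective.injOn.bijOn_image
    exact this.congr fun x hx => (hf x hx).symm
  have h3 : ∀ f ∈ bijSet I J, (∑ g ∈ bijSet Iᶜ Jᶜ,
        if (∀ x ∈ I, f x = σ x) ∧ (∀ x ∈ Iᶜ, g x = σ x) then Ψ f g else 0)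
      = if (∀ x ∈ I, f x = σ x) then (N : ℝ) ^ Iᶜᶜ.card * Ψ σ σ else 0 := by
    intro f hf
    by_cases hfa : ∀ x ∈ I, f x = σ x
    · rw [if_pos hfa, ← Finset.sum_filter]
      have hfil : (bijSet Iᶜ Jᶜ).filter (fun g => (∀ x ∈ I, f x = σ x) ∧ (∀ x ∈ Iᶜ, g x = σ x))
          = Finset.univ.filter (fun g : Fin N → Fin N => ∀ x ∈ Iᶜ, g x = σ x) := by
        ext g
        simp only [Finset.mem_filter, Finset.mem_univ, true_and]
        exact ⟨fun h => h.2.2, fun h => ⟨hbIc g h, hfa, h⟩⟩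
      have hcon : ∀ g ∈ Finset.univ.filter (fun g : Fin N → Fin N => ∀ x ∈ Iᶜ, g x = σ x),
          Ψ f g = Ψ σ σ := by
        intro g hg
        simp only [Finset.mem_filter, Finset.mem_univ, true_and] at hg
        exact hΨ _ _ _ _ hfa hg
      rw [hfil, Finset.sum_congr rfl hcon, Finset.sum_const, cd_agree_card]
      simp
    · rw [if_neg hfa]
      exact Finset.sum_eq_zero fun g _ => if_neg fun h => hfa h.1
  rw [Finset.sum_congr rfl h3, ← Finset.sum_filter]
  have hfil : (bijSet I J).filter (fun f => ∀ x ∈ I, f x = σ x)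
      = Finset.univ.filter (fun f : Fin N → Fin N => ∀ x ∈ I, f x = σ x) := by
    ext g
    simp only [Finset.mem_filter, Finset.mem_univ, true_and]
    exact ⟨fun h => h.2, fun h => ⟨hbI g h, h⟩⟩
  rw [hfil, Finset.sum_const, cd_agree_card]
  simp [mul_assoc]

lemma cd_rhs {N : ℕ} (hN : 0 < N) (n : ℕ) (I : Finset (Fin N)) (hI : I.card = n)
    (Ψ : (Fin N → Fin N) → (Fin N → Fin N) → ℝ)
    (hΨ : ∀ f g f' g', (∀ x ∈ I, f x = f' x) → (∀ x ∈ Iᶜ, g x = g' x) → Ψ f g = Ψ f' g') :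
    (∑ J ∈ Finset.powersetCard n (Finset.univ : Finset (Fin N)),
      (∑ f ∈ bijSet I J, ∑ g ∈ bijSet Iᶜ Jᶜ, Ψ f g)
        / (((bijSet I J).card : ℝ) * ((bijSet Iᶜ Jᶜ).card : ℝ)))
    / ((Finset.powersetCard n (Finset.univ : Finset (Fin N))).card : ℝ)
    = (∑ σ : Equiv.Perm (Fin N), Ψ σ σ) / (Nat.factorial N : ℝ) := by
  set PP := Finset.powersetCard n (Finset.univ : Finset (Fin N)) with hPP
  let T : Finset (Fin N) → Finset (Equiv.Perm (Fin N)) := fun J =>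
    Finset.univ.filter (fun σ : Equiv.Perm (Fin N) => I.image σ = J)
  have hmaps : ∀ σ ∈ (Finset.univ : Finset (Equiv.Perm (Fin N))), I.image σ ∈ PP := by
    intro σ _
    simp [hPP, Finset.mem_powersetCard, Finset.card_image_of_injective _ σ.injective, hI]
  have hIP : I ∈ PP := by simp [hPP, Finset.mem_powersetCard, hI]
  have hTc : ∀ J ∈ PP, (T J).card = (T I).card := by
    intro J hJ
    apply cd_T_card
    rw [(Finset.mem_powersetCard.mp hJ).2, hI]
  have htot : (Nat.factorial N : ℝ) = (PP.card : ℝ) * ((T I).card : ℝ) := by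
    have h1 := Finset.card_eq_sum_card_fiberwise (s := (Finset.univ : Finset (Equiv.Perm (Fin N))))
      (t := PP) (f := fun σ : Equiv.Perm (Fin N) => I.image σ) hmaps
    rw [Finset.card_univ, Fintype.card_perm, Fintype.card_fin] at h1
    rw [Finset.sum_congr rfl hTc, Finset.sum_const] at h1
    rw [h1]; simp
  have hT0 : ((T I).card : ℝ) ≠ 0 := by
    intro h
    rw [h, mul_zero] at htot
    exact (Nat.factorial_ne_zero N) (by exact_mod_cast htot)
  have hK : ((N : ℝ) ^ Iᶜ.card * (N : ℝ) ^ Iᶜᶜ.card) ≠ 0 := by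
    have : (N:ℝ) ≠ 0 := by exact_mod_cast hN.ne'
    positivity
  have hone : ∀ J ∈ PP, (((bijSet I J).card : ℝ) * ((bijSet Iᶜ Jᶜ).card : ℝ))
      = ((N : ℝ) ^ Iᶜ.card * (N : ℝ) ^ Iᶜᶜ.card) * ((T I).card : ℝ) := by
    intro J hJ
    have := cd_fiber I J (fun _ _ => 1) (fun _ _ _ _ _ _ => rfl)
    simp only [Finset.sum_const, nsmul_eq_mul, mul_one] at this
    rw [this, ← hTc J hJ]
  have hJ : ∀ J ∈ PP, (∑ f ∈ bijSet I J, ∑ g ∈ bijSet Iᶜ Jᶜ, Ψ f g)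
        / (((bijSet I J).card : ℝ) * ((bijSet Iᶜ Jᶜ).card : ℝ))
      = (∑ σ ∈ T J, Ψ σ σ) / ((T I).card : ℝ) := by
    intro J hJ
    rw [hone J hJ, cd_fiber I J Ψ hΨ, mul_div_mul_left _ _ hK]
  rw [Finset.sum_congr rfl hJ, ← Finset.sum_div]
  have : ∑ J ∈ PP, ∑ σ ∈ T J, Ψ σ σ = ∑ σ : Equiv.Perm (Fin N), Ψ σ σ :=
    Finset.sum_fiberwise_of_maps_to hmaps _
  rw [this, htot, div_div, mul_comm]

noncomputable def cdUt {N : ℕ} (d : Fin N → Fin N → Fin N → Fin N → ℝ) (I : Finset (Fin N))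
    (f g : Fin N → Fin N) : ℝ :=
  ∑ i ∈ I, ∑ j ∈ Iᶜ, d i j (f i) (g j)
      - (∑ a ∈ I, ∑ b ∈ I, ∑ j ∈ Iᶜ, d a j (f b) (g j)) / (I.card : ℝ)
      - (∑ i ∈ I, ∑ a ∈ Iᶜ, ∑ b ∈ Iᶜ, d i a (f i) (g b)) / (Iᶜ.card : ℝ)
      + (∑ a ∈ I, ∑ b ∈ I, ∑ c ∈ Iᶜ, ∑ e ∈ Iᶜ, d a c (f b) (g e))
          / ((I.card : ℝ) * (Iᶜ.card : ℝ))

lemma cd_sw {N : ℕ} (g : Fin N → Fin N → ℝ) (a b e : Fin N) (hae : a ≠ e) (hbe : b ≠ e) :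
    ∑ σ : Equiv.Perm (Fin N), g (σ b) (σ e) = ∑ σ : Equiv.Perm (Fin N), g (σ a) (σ e) := by
  rw [← Equiv.sum_comp (Equiv.mulRight (Equiv.swap a b))]
  refine Finset.sum_congr rfl fun σ _ => ?_
  simp [Equiv.swap_apply_of_ne_of_ne hae.symm hbe.symm]

lemma cd_mean1 {N : ℕ} (hN : 0 < N) (e : Fin N → Fin N → ℝ) :
    permExp N (fun σ => ∑ i, e i (σ i)) = (∑ i, ∑ k, e i k) / (N : ℝ) := by
  have hN0 : (N:ℝ) ≠ 0 := by exact_mod_cast hN.ne'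
  have hf : (Nat.factorial N : ℝ) ≠ 0 := by exact_mod_cast Nat.factorial_ne_zero N
  have h1 : ∀ (f : Fin N → ℝ) (i : Fin N),
      (N:ℝ) * ∑ σ : Equiv.Perm (Fin N), f (σ i) = (Nat.factorial N : ℝ) * ∑ k, f k := by
    intro f i
    have h2 : ∀ j : Fin N, ∑ σ : Equiv.Perm (Fin N), f (σ j) = ∑ σ : Equiv.Perm (Fin N), f (σ i) := by
      intro j
      rw [← Equiv.sum_comp (Equiv.mulRight (Equiv.swap i j))]
      refine Finset.sum_congr rfl fun σ _ => ?_
      simp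
    have h3 : ∑ j : Fin N, ∑ σ : Equiv.Perm (Fin N), f (σ j)
        = (N:ℝ) * ∑ σ : Equiv.Perm (Fin N), f (σ i) := by
      rw [Finset.sum_congr rfl fun j _ => h2 j]; simp
    rw [← h3, Finset.sum_comm]
    have h4 : ∀ σ : Equiv.Perm (Fin N), ∑ j, f (σ j) = ∑ k, f k := fun σ => Equiv.sum_comp σ f
    simp only [h4]
    simp [Fintype.card_perm]
  unfold permExp
  rw [Finset.sum_comm, div_eq_div_iff hf hN0, Finset.sum_mul, Finset.sum_mul]
  refine Finset.sum_congr rfl fun i _ => ?_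
  rw [mul_comm, h1 (e i) i, mul_comm]

lemma cd_Ut_mean {N : ℕ} (d : Fin N → Fin N → Fin N → Fin N → ℝ) (I : Finset (Fin N))
    (hI : I.Nonempty) :
    ∑ σ : Equiv.Perm (Fin N), cdUt d I σ σ = 0 := by
  have hs0 : (I.card : ℝ) ≠ 0 := by exact_mod_cast hI.card_pos.ne'
  have hne : ∀ a ∈ I, ∀ e ∈ Iᶜ, a ≠ e := by
    rintro a ha e he rfl
    exact (Finset.mem_compl.mp he) ha
  have k1 : ∑ σ : Equiv.Perm (Fin N), ∑ a ∈ I, ∑ b ∈ I, ∑ j ∈ Iᶜ, d a j (σ b) (σ j)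
      = (I.card : ℝ) * ∑ σ : Equiv.Perm (Fin N), ∑ i ∈ I, ∑ j ∈ Iᶜ, d i j (σ i) (σ j) := by
    rw [Finset.sum_comm, Finset.sum_comm (t := I), Finset.mul_sum]
    refine Finset.sum_congr rfl fun a ha => ?_
    rw [Finset.sum_comm, ← nsmul_eq_mul, ← Finset.sum_const]
    refine Finset.sum_congr rfl fun b hb => ?_
    rw [Finset.sum_comm, Finset.sum_comm (t := Iᶜ)]
    refine Finset.sum_congr rfl fun j hj => ?_
    exact cd_sw (d a j) a b j (hne a ha j hj) (hne b hb j hj)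
  have k2 : ∑ σ : Equiv.Perm (Fin N), ∑ a ∈ I, ∑ b ∈ I, ∑ c ∈ Iᶜ, ∑ e ∈ Iᶜ, d a c (σ b) (σ e)
      = (I.card : ℝ) * ∑ σ : Equiv.Perm (Fin N), ∑ i ∈ I, ∑ c ∈ Iᶜ, ∑ e ∈ Iᶜ, d i c (σ i) (σ e) := by
    rw [Finset.sum_comm, Finset.sum_comm (t := I), Finset.mul_sum]
    refine Finset.sum_congr rfl fun a ha => ?_
    rw [Finset.sum_comm, ← nsmul_eq_mul, ← Finset.sum_const]
    refine Finset.sum_congr rfl fun b hb => ?_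
    rw [Finset.sum_comm, Finset.sum_comm (t := Iᶜ)]
    refine Finset.sum_congr rfl fun c hc => ?_
    rw [Finset.sum_comm, Finset.sum_comm (t := Iᶜ)]
    refine Finset.sum_congr rfl fun e he => ?_
    exact cd_sw (d a c) a b e (hne a ha e he) (hne b hb e he)
  unfold cdUt
  rw [Finset.sum_add_distrib, Finset.sum_sub_distrib, Finset.sum_sub_distrib,
    ← Finset.sum_div, ← Finset.sum_div, ← Finset.sum_div, k1, k2,
    mul_div_cancel_left₀ _ hs0, mul_div_mul_left _ _ hs0]
  ring

lemma cd_ratio (N n : ℕ) (hn : 2 ≤ n) (hN : n + 2 ≤ N) (C q11 q12 q21 q22 n1 n2 : ℝ)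
    (hC : C = ((N.choose n : ℕ) : ℝ))
    (h11 : q11 = (((N - 2).choose (n - 1) : ℕ) : ℝ))
    (h12 : q12 = (((N - 3).choose (n - 1) : ℕ) : ℝ))
    (h21 : q21 = (((N - 3).choose (n - 2) : ℕ) : ℝ))
    (h22 : q22 = (((N - 4).choose (n - 2) : ℕ) : ℝ))
    (hn1 : n1 = n) (hn2 : n2 = ((N - n : ℕ) : ℝ)) :
    q11 * ((n1 + n2) * (n1 + n2 - 1)) = C * (n1 * n2) ∧
    q21 * (n1 + n2 - 2) = q11 * (n1 - 1) ∧
    q12 * (n1 + n2 - 2) = q11 * (n2 - 1) ∧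
    q22 * (n1 + n2 - 3) = q21 * (n2 - 1) := by
  obtain ⟨a, rfl⟩ : ∃ a, n = a + 2 := ⟨n - 2, by omega⟩
  obtain ⟨b, rfl⟩ : ∃ b, N = a + 2 + (b + 2) := ⟨N - (a + 2) - 2, by omega⟩
  have e1 : a + 2 + (b + 2) - 2 = a + b + 2 := by omega
  have e2 : a + 2 + (b + 2) - 3 = a + b + 1 := by omega
  have e3 : a + 2 + (b + 2) - 4 = a + b := by omega
  have e4 : a + 2 - 1 = a + 1 := by omega
  have e5 : a + 2 - 2 = a := by omega
  have e6 : a + 2 + (b + 2) - (a + 2) = b + 2 := by omega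
  have e7 : a + 2 + (b + 2) = a + b + 3 + 1 := by omega
  rw [e1, e4] at h11
  rw [e2, e4] at h12
  rw [e2, e5] at h21
  rw [e3, e5] at h22
  rw [e6] at hn2
  rw [e7] at hC
  have c1 := Nat.add_one_mul_choose_eq (a + b + 3) (a + 1)
  have c2 := Nat.choose_mul_succ_eq (a + b + 2) (a + 1)
  have c3 := Nat.add_one_mul_choose_eq (a + b + 1) a
  have c4 := Nat.choose_mul_succ_eq (a + b + 1) (a + 1)
  have c5 := Nat.choose_mul_succ_eq (a + b) a
  have f2 : a + b + 2 + 1 - (a + 1) = b + 2 := by omega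
  have f4 : a + b + 1 + 1 - (a + 1) = b + 1 := by omega
  have f5 : a + b + 1 - a = b + 1 := by omega
  rw [f2] at c2
  rw [f4] at c4
  rw [f5] at c5
  have g1 := congrArg (Nat.cast (R := ℝ)) c1
  have g2 := congrArg (Nat.cast (R := ℝ)) c2
  have g3 := congrArg (Nat.cast (R := ℝ)) c3
  have g4 := congrArg (Nat.cast (R := ℝ)) c4
  have g5 := congrArg (Nat.cast (R := ℝ)) c5
  push_cast at g1 g2 g3 g4 g5 hn1 hn2
  have k3 : a + b + 2 + 1 = a + b + 3 := rfl
  have k2 : a + b + 1 + 1 = a + b + 2 := rfl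
  have k1 : a + 1 + 1 = a + 2 := rfl
  rw [k1, ← hC] at g1
  rw [k3, ← h11] at g2
  rw [k2, ← h21, ← h11] at g3
  rw [k2, ← h11, ← h12] at g4
  rw [← h22, ← h21] at g5
  set X := (((a + b + 3).choose (a + 1) : ℕ) : ℝ)
  subst hn1 hn2
  refine ⟨?_, ?_, ?_, ?_⟩
  · linear_combination ((a:ℝ) + b + 4) * g2 + ((b:ℝ) + 2) * g1
  · linear_combination g3
  · linear_combination g4
  · linear_combination g5

lemma cd_num (v P : ℝ) (hv : 20 ≤ v) (hP : v ^ 2 - 1 ≤ 4 * P) (k δ γ : ℝ)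
    (hk : k * (v * (v-1) * (v-2) * (v-3)) = (P-v)*(v-2)*(v-3) + (2*P-v)*(v-3) + (P-v+1))
    (hδ : δ * (v * (v-1) * (v-2) * (v-3)) = -(2*P-v)*(v-3) + (v-2)*(v-3) - 5*(P-v+1))
    (hγ : γ * (v * (v-1) * (v-2) * (v-3)) = P-v+1) :
    2/9 ≤ k ∧ 0 ≤ γ ∧ γ * v^2 ≤ 7/2 * k ∧ δ ≤ 0 ∧ -δ * v ≤ 5/2 * k := by
  obtain ⟨x, hx, rfl⟩ : ∃ x : ℝ, 0 ≤ x ∧ v = x + 20 := ⟨v - 20, by linarith, by ring⟩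
  obtain ⟨y, hy, rfl⟩ : ∃ y : ℝ, 0 ≤ y ∧ P = ((x+20)^2 - 1)/4 + y := ⟨P - ((x+20)^2 - 1)/4, by linarith, by ring⟩
  set M := ((x+20) * ((x+20)-1) * ((x+20)-2) * ((x+20)-3)) with hM
  have hMp : 0 < M := by
    have : M = (x+20)*(x+19)*(x+18)*(x+17) := by rw [hM]; ring
    rw [this]; positivity
  refine ⟨?_, ?_, ?_, ?_, ?_⟩ <;> refine le_of_mul_le_mul_right ?_ hMp
  · rw [hk, hM, ← sub_nonneg]
    ring_nf
    positivity
  · rw [hγ, zero_mul]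
    ring_nf
    positivity
  · rw [mul_right_comm, hγ, mul_assoc, hk, ← sub_nonneg]
    ring_nf
    positivity
  · rw [hδ, zero_mul, ← neg_nonneg]
    ring_nf
    positivity
  · rw [mul_right_comm, neg_mul, hδ, mul_assoc, hk, ← sub_nonneg]
    ring_nf
    positivity

lemma cd_G {N : ℕ} (n : ℕ) (hn : 2 ≤ n) (hnN : n + 2 ≤ N)
    (d : Fin N → Fin N → Fin N → Fin N → ℝ)
    (hdeg1 : ∀ i j k, ∑ l, d i j k l = 0)
    (hdeg2 : ∀ i j l, ∑ k, d i j k l = 0)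
    (hdeg3 : ∀ i k l, ∑ j, d i j k l = 0)
    (hdeg4 : ∀ j k l, ∑ i, d i j k l = 0)
    (v P : ℝ) (hv : v = N) (hP : P = (n : ℝ) * ((N - n : ℕ) : ℝ)) (k δ γ : ℝ)
    (hk : k * (v * (v-1) * (v-2) * (v-3)) = (P-v)*(v-2)*(v-3) + (2*P-v)*(v-3) + (P-v+1))
    (hδ : δ * (v * (v-1) * (v-2) * (v-3)) = -(2*P-v)*(v-3) + (v-2)*(v-3) - 5*(P-v+1))
    (hγ : γ * (v * (v-1) * (v-2) * (v-3)) = P-v+1)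
    (σ : Equiv.Perm (Fin N)) :
    ∑ I ∈ Finset.powersetCard n (Finset.univ : Finset (Fin N)), cdUt d I σ σ
    = ((Finset.powersetCard n (Finset.univ : Finset (Fin N))).card : ℝ) *
      (k * (∑ p ∈ (Finset.univ : Finset (Fin N)).offDiag, d p.1 p.2 (σ p.1) (σ p.2))
       + δ * (∑ i, d i i (σ i) (σ i))
       + γ * ((∑ i, ∑ j, d i i j j) + ∑ i, ∑ j, d i j (σ j) (σ i))) := by
  set h : Fin N → Fin N → Fin N → Fin N → ℝ := fun i j k l => d i j (σ k) (σ l) with hh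
  have hd1 : ∀ i j k, ∑ l, h i j k l = 0 := fun i j k => by
    rw [← hdeg1 i j (σ k)]; exact Equiv.sum_comp σ (fun l => d i j (σ k) l)
  have hd2 : ∀ i j l, ∑ k, h i j k l = 0 := fun i j l => by
    rw [← hdeg2 i j (σ l)]; exact Equiv.sum_comp σ (fun k => d i j k (σ l))
  have hd3 : ∀ i k l, ∑ j, h i j k l = 0 := fun i k l => hdeg3 i _ _
  have hd4 : ∀ j k l, ∑ i, h i j k l = 0 := fun j k l => hdeg4 j _ _
  obtain ⟨q11, h11⟩ : ∃ q : ℝ, q = (((N - 2).choose (n - 1) : ℕ) : ℝ) := ⟨_, rfl⟩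
  obtain ⟨q12, h12⟩ : ∃ q : ℝ, q = (((N - 3).choose (n - 1) : ℕ) : ℝ) := ⟨_, rfl⟩
  obtain ⟨q21, h21⟩ : ∃ q : ℝ, q = (((N - 3).choose (n - 2) : ℕ) : ℝ) := ⟨_, rfl⟩
  obtain ⟨q22, h22⟩ : ∃ q : ℝ, q = (((N - 4).choose (n - 2) : ℕ) : ℝ) := ⟨_, rfl⟩
  obtain ⟨C, hC⟩ : ∃ q : ℝ, q = ((N.choose n : ℕ) : ℝ) := ⟨_, rfl⟩
  obtain ⟨n1, hn1⟩ : ∃ q : ℝ, q = (n : ℝ) := ⟨_, rfl⟩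
  obtain ⟨n2, hn2⟩ : ∃ q : ℝ, q = ((N - n : ℕ) : ℝ) := ⟨_, rfl⟩
  obtain ⟨r1, r2, r3, r4⟩ := cd_ratio N n hn hnN C q11 q12 q21 q22 n1 n2 hC h11 h12 h21 h22 hn1 hn2
  have E0 := cd_E0 n hn q11 h11 h
  have E1 := cd_E1 n hn q11 q12 q21 q22 h11 h12 h21 h22 h hd2 hd4
  have E2 := cd_E2 n hn q11 q12 q21 q22 h11 h12 h21 h22 h hd1 hd3
  have E3 := cd_E3 n hn q11 q12 q21 q22 h11 h12 h21 h22 h hd1 hd2 hd3 hd4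
  have hn1p : 2 ≤ n1 := by rw [hn1]; exact_mod_cast hn
  have hn2p : 2 ≤ n2 := by rw [hn2]; exact_mod_cast (by omega : 2 ≤ N - n)
  have hvn : v = n1 + n2 := by
    rw [hv, hn1, hn2, ← Nat.cast_add]; congr 1; omega
  have hPn : P = n1 * n2 := by rw [hP, hn1, hn2]
  have hcard : ((Finset.powersetCard n (Finset.univ : Finset (Fin N))).card : ℝ) = C := by
    rw [hC, Finset.card_powersetCard, Finset.card_univ, Fintype.card_fin]
  have hoff : ∑ p ∈ (Finset.univ : Finset (Fin N)).offDiag, d p.1 p.2 (σ p.1) (σ p.2)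
      = (∑ i, ∑ j, h i j i j) - ∑ i, h i i i i := by
    have e1 := Finset.sum_union (Finset.disjoint_diag_offDiag (Finset.univ : Finset (Fin N)))
      (f := fun p : Fin N × Fin N => d p.1 p.2 (σ p.1) (σ p.2))
    rw [Finset.diag_union_offDiag, Finset.sum_product, Finset.sum_diag] at e1
    exact eq_sub_of_add_eq' e1.symm
  have hZ : ∑ i, ∑ j, h i i j j = ∑ i, ∑ j, d i i j j :=
    Finset.sum_congr rfl fun i _ => Equiv.sum_comp σ (fun j => d i i j j)
  have hsum : ∑ I ∈ Finset.powersetCard n (Finset.univ : Finset (Fin N)), cdUt d I σ σ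
      = (∑ I ∈ Finset.powersetCard n (Finset.univ : Finset (Fin N)), ∑ a ∈ I, ∑ c ∈ Iᶜ, h a c a c)
      - (∑ I ∈ Finset.powersetCard n (Finset.univ : Finset (Fin N)),
          ∑ a ∈ I, ∑ b ∈ I, ∑ c ∈ Iᶜ, h a c b c) / n1
      - (∑ I ∈ Finset.powersetCard n (Finset.univ : Finset (Fin N)),
          ∑ a ∈ I, ∑ c ∈ Iᶜ, ∑ e ∈ Iᶜ, h a c a e) / n2
      + (∑ I ∈ Finset.powersetCard n (Finset.univ : Finset (Fin N)),
          ∑ a ∈ I, ∑ b ∈ I, ∑ c ∈ Iᶜ, ∑ e ∈ Iᶜ, h a c b e) / (n1 * n2) := by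
    rw [Finset.sum_div, Finset.sum_div, Finset.sum_div, ← Finset.sum_sub_distrib,
      ← Finset.sum_sub_distrib, ← Finset.sum_add_distrib]
    refine Finset.sum_congr rfl fun I hI => ?_
    have c1 : I.card = n := (Finset.mem_powersetCard.mp hI).2
    have c2 : Iᶜ.card = N - n := by rw [Finset.card_compl, Fintype.card_fin, c1]
    unfold cdUt
    rw [c1, c2, ← hn1, ← hn2]
  have hXX : ∑ i, ∑ j, d i j (σ j) (σ i) = ∑ i, ∑ j, h i j j i := rfl
  have hDD : ∑ i, d i i (σ i) (σ i) = ∑ i, h i i i i := rfl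
  rw [hsum, E0, E1, E2, E3, hoff, hcard, hXX, hDD, hZ]
  generalize ∑ i, ∑ j, h i j i j = Wf
  generalize ∑ i, h i i i i = D
  generalize ∑ i, ∑ j, h i j j i = X
  generalize ∑ i, ∑ j, d i i j j = Z
  clear E0 E1 E2 E3 hsum hoff hXX hDD hZ hd1 hd2 hd3 hd4
  have p0 : n1 ≠ 0 := by positivity
  have p0' : n2 ≠ 0 := by positivity
  have p1 : v ≠ 0 := by rw [hvn]; positivity
  have p2 : v - 1 ≠ 0 := by rw [hvn]; apply ne_of_gt; linarith
  have p3 : v - 2 ≠ 0 := by rw [hvn]; apply ne_of_gt; linarith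
  have p4 : v - 3 ≠ 0 := by rw [hvn]; apply ne_of_gt; linarith
  rw [← hvn] at r1 r2 r3 r4
  have s1 : q11 = C * (n1 * n2) / (v * (v - 1)) := by rw [eq_div_iff (mul_ne_zero p1 p2), r1]
  have s2 : q21 = q11 * (n1 - 1) / (v - 2) := by rw [eq_div_iff p3, r2]
  have s3 : q12 = q11 * (n2 - 1) / (v - 2) := by rw [eq_div_iff p3, r3]
  have s4 : q22 = q21 * (n2 - 1) / (v - 3) := by rw [eq_div_iff p4, r4]
  have hM : v * (v-1) * (v-2) * (v-3) ≠ 0 := mul_ne_zero (mul_ne_zero (mul_ne_zero p1 p2) p3) p4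
  rw [← eq_div_iff hM] at hk hδ hγ
  rw [s4, s3, s2, s1, hk, hδ, hγ, hPn]
  obtain rfl : n2 = v - n1 := by linarith
  field_simp
  ring

lemma cd_abs {Ω : Type*} [Fintype Ω] (F : ℝ) (hF0 : 0 < F) (hF : (Fintype.card Ω : ℝ) = F)
    (W D X G : Ω → ℝ) (lam κ δ γ Z w dd x S K : ℝ) (hκ : 2/9 ≤ κ)
    (hw : (∑ ω, W ω) / F = w) (hd : (∑ ω, D ω) / F = dd) (hx : (∑ ω, X ω) / F = x)
    (hG : ∑ ω, G ω = 0) (hrel : ∀ ω, G ω = κ * W ω + δ * D ω + γ * (Z + X ω))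
    (hA : (∑ ω, Real.exp (-(4 * lam * δ / κ) * (D ω - dd))) / F ≤ K)
    (hB : (∑ ω, Real.exp (-(4 * lam * γ / κ) * (X ω - x))) / F ≤ K)
    (hS : (∑ ω, Real.exp (9 * lam * G ω)) / F ≤ S) :
    (∑ ω, Real.exp (lam * (W ω - w))) / F ≤ Real.sqrt K * Real.sqrt S := by
  have hκ0 : 0 < κ := by linarith
  rw [div_eq_iff hF0.ne'] at hw hd hx
  rw [div_le_iff₀ hF0] at hA hB hS ⊢
  have hmean : κ * w + δ * dd + γ * (Z + x) = 0 := by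
    have h1 : ∑ ω, G ω = κ * (∑ ω, W ω) + δ * (∑ ω, D ω) + γ * (F * Z + ∑ ω, X ω) := by
      rw [Finset.sum_congr rfl fun ω _ => hrel ω]
      simp only [Finset.sum_add_distrib, ← Finset.mul_sum, Finset.sum_const, Finset.card_univ,
        nsmul_eq_mul, hF]
    rw [hG, hw, hd, hx] at h1
    have h2 : (κ * w + δ * dd + γ * (Z + x)) * F = 0 := by linarith
    exact (mul_eq_zero.mp h2).resolve_right hF0.ne'
  set a : Ω → ℝ := fun ω => lam / κ * G ω with ha
  set b : Ω → ℝ := fun ω => -(lam * δ / κ) * (D ω - dd) + -(lam * γ / κ) * (X ω - x) with hb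
  have hsplit : ∀ ω, Real.exp (lam * (W ω - w)) = Real.exp (a ω) * Real.exp (b ω) := by
    intro ω
    rw [← Real.exp_add]
    congr 1
    simp only [ha, hb, hrel ω]
    field_simp
    linear_combination (-lam) * hmean
  rw [Finset.sum_congr rfl fun ω _ => hsplit ω]
  have hCS := Real.sum_mul_le_sqrt_mul_sqrt Finset.univ (fun ω => Real.exp (a ω))
    (fun ω => Real.exp (b ω))
  have h1 : ∑ ω, Real.exp (a ω) ^ 2 ≤ S * F := by
    refine le_trans ?_ hS
    set r : ℝ := 2 / (9 * κ) with hr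
    have hr0 : 0 ≤ r := by positivity
    have hr1 : r ≤ 1 := by rw [hr, div_le_one (by positivity)]; linarith
    have key : ∀ ω, Real.exp (a ω) ^ 2
        ≤ Real.exp (9 * lam * G ω) - (1 - r) * (9 * lam * G ω) := by
      intro ω
      have e1 : Real.exp (a ω) ^ 2 = Real.exp (r * (9 * lam * G ω)) := by
        rw [← Real.exp_nat_mul]; congr 1; simp only [ha, hr]; push_cast; field_simp
      rw [e1]
      set Y := 9 * lam * G ω
      have cv := convexOn_exp.2 (Set.mem_univ Y) (Set.mem_univ 0) hr0
        (sub_nonneg.mpr hr1) (by ring)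
      simp only [smul_eq_mul, mul_zero, add_zero, Real.exp_zero, mul_one] at cv
      have := Real.add_one_le_exp Y
      nlinarith [mul_le_mul_of_nonneg_left this (sub_nonneg.mpr hr1)]
    refine (Finset.sum_le_sum fun ω _ => key ω).trans ?_
    rw [Finset.sum_sub_distrib, ← Finset.mul_sum, ← Finset.mul_sum, hG]
    simp
  have h2 : ∑ ω, Real.exp (b ω) ^ 2 ≤ K * F := by
    have key : ∀ ω, Real.exp (b ω) ^ 2
        ≤ (Real.exp (-(4 * lam * δ / κ) * (D ω - dd)) + Real.exp (-(4 * lam * γ / κ) * (X ω - x))) / 2 := by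
      intro ω
      set p := Real.exp (-(2 * lam * δ / κ) * (D ω - dd)) with hp
      set q := Real.exp (-(2 * lam * γ / κ) * (X ω - x)) with hq
      have e1 : Real.exp (b ω) ^ 2 = p * q := by
        rw [← Real.exp_nat_mul, hp, hq, ← Real.exp_add]; congr 1; simp only [hb]; push_cast; ring
      have e2 : Real.exp (-(4 * lam * δ / κ) * (D ω - dd)) = p ^ 2 := by
        rw [hp, ← Real.exp_nat_mul]; congr 1; push_cast; ring
      have e3 : Real.exp (-(4 * lam * γ / κ) * (X ω - x)) = q ^ 2 := by
        rw [hq, ← Real.exp_nat_mul]; congr 1; push_cast; ring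
      rw [e1, e2, e3]
      nlinarith [sq_nonneg (p - q)]
    refine (Finset.sum_le_sum fun ω _ => key ω).trans ?_
    rw [← Finset.sum_div, Finset.sum_add_distrib]
    linarith
  refine hCS.trans ((mul_le_mul (Real.sqrt_le_sqrt h1) (Real.sqrt_le_sqrt h2)
    (Real.sqrt_nonneg _) (Real.sqrt_nonneg _)).trans (le_of_eq ?_))
  rw [Real.sqrt_mul' _ hF0.le, Real.sqrt_mul' _ hF0.le]
  have := Real.mul_self_sqrt hF0.le
  linear_combination (Real.sqrt K * Real.sqrt S) * this

lemma cd_center {N : ℕ} (Y : Equiv.Perm (Fin N) → ℝ) (s m R : ℝ)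
    (h : (∑ σ, Real.exp (s * Y σ)) / (Nat.factorial N : ℝ) ≤ Real.exp (s * m + R)) :
    (∑ σ, Real.exp (s * (Y σ - m))) / (Nat.factorial N : ℝ) ≤ Real.exp R := by
  have e : ∀ σ, Real.exp (s * (Y σ - m)) = Real.exp (-(s * m)) * Real.exp (s * Y σ) := by
    intro σ; rw [← Real.exp_add]; congr 1; ring
  rw [Finset.sum_congr rfl fun σ _ => e σ, ← Finset.mul_sum, mul_div_assoc]
  refine (mul_le_mul_of_nonneg_left h (Real.exp_pos _).le).trans (le_of_eq ?_)
  rw [← Real.exp_add]; congr 1; ring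

lemma cd_Dbound {N : ℕ} (hN : 0 < N) (d : Fin N → Fin N → Fin N → Fin N → ℝ)
    (Q Vt lam s : ℝ) (hQ : Q = ∑ i, ∑ j, ∑ k, ∑ l, (d i j k l) ^ 2)
    (hV : Vt = Q / (N : ℝ) ^ 2) (hs : (s * N) ^ 2 ≤ 100 * lam ^ 2) :
    (∑ σ : Equiv.Perm (Fin N), Real.exp (s * ((∑ i, d i i (σ i) (σ i))
      - permExp N (fun σ => ∑ i, d i i (σ i) (σ i))))) / (Nat.factorial N : ℝ)
      ≤ Real.exp (100 * Vt * lam ^ 2) := by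
  have hN0 : (0:ℝ) < N := by exact_mod_cast hN
  apply cd_center
  rw [cd_mean1 hN (fun i k => d i i k k)]
  have h := cd_mgf N (fun j k => s * d j j k k)
  simp only [← Finset.mul_sum] at h
  refine h.trans (Real.exp_le_exp.mpr ?_)
  have hQ0 : 0 ≤ Q := by
    rw [hQ]
    exact Finset.sum_nonneg fun i _ => Finset.sum_nonneg fun j _ => Finset.sum_nonneg fun k _ =>
      Finset.sum_nonneg fun l _ => sq_nonneg _
  have h1 : ∑ i, ∑ k, (s * d i i k k) ^ 2 ≤ s ^ 2 * Q := by
    rw [hQ, Finset.mul_sum]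
    refine Finset.sum_le_sum fun i _ => ?_
    simp only [mul_pow, ← Finset.mul_sum]
    refine mul_le_mul_of_nonneg_left ?_ (sq_nonneg s)
    calc ∑ k, d i i k k ^ 2 ≤ ∑ k, ∑ l, d i i k l ^ 2 :=
          Finset.sum_le_sum fun k _ => Finset.single_le_sum (f := fun l => d i i k l ^ 2)
            (fun l _ => sq_nonneg _) (Finset.mem_univ k)
      _ ≤ ∑ j, ∑ k, ∑ l, d i j k l ^ 2 :=
          Finset.single_le_sum (f := fun j => ∑ k, ∑ l, d i j k l ^ 2)
            (fun j _ => Finset.sum_nonneg fun k _ => Finset.sum_nonneg fun l _ => sq_nonneg _) (Finset.mem_univ i)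
  have h2 : s ^ 2 * Q = (s * N) ^ 2 * Vt := by rw [hV]; field_simp
  have hV0 : 0 ≤ Vt := by rw [hV]; positivity
  have h3 := mul_le_mul_of_nonneg_right hs hV0
  rw [mul_div_assoc]
  linarith

lemma cd_Xbound {N : ℕ} (hN : 0 < N) (d : Fin N → Fin N → Fin N → Fin N → ℝ)
    (Q Vt lam s : ℝ) (hQ : Q = ∑ i, ∑ j, ∑ k, ∑ l, (d i j k l) ^ 2)
    (hV : Vt = Q / (N : ℝ) ^ 2) (hs : (s * N ^ 2) ^ 2 ≤ 200 * lam ^ 2) :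
    (∑ σ : Equiv.Perm (Fin N), Real.exp (s * ((∑ i, ∑ j, d i j (σ j) (σ i))
      - permExp N (fun σ => ∑ i, ∑ j, d i j (σ j) (σ i))))) / (Nat.factorial N : ℝ)
      ≤ Real.exp (100 * Vt * lam ^ 2) := by
  have hN0 : (0:ℝ) < N := by exact_mod_cast hN
  have hQ0 : 0 ≤ Q := by
    rw [hQ]
    exact Finset.sum_nonneg fun i _ => Finset.sum_nonneg fun j _ => Finset.sum_nonneg fun k _ =>
      Finset.sum_nonneg fun l _ => sq_nonneg _
  have hV0 : 0 ≤ Vt := by rw [hV]; positivity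
  apply cd_center
  set b := |s| * (N ^ 2 * Real.sqrt Vt) with hb
  have hX : ∀ σ : Equiv.Perm (Fin N), |∑ i, ∑ j, d i j (σ j) (σ i)| ≤ N ^ 2 * Real.sqrt Vt := by
    intro σ
    apply abs_le_of_sq_le_sq _ (by positivity)
    have c1 : (∑ i, ∑ j, d i j (σ j) (σ i)) ^ 2
        ≤ N * ∑ i, (∑ j, d i j (σ j) (σ i)) ^ 2 := by
      have := sq_sum_le_card_mul_sum_sq (s := (Finset.univ : Finset (Fin N)))
        (f := fun i => ∑ j, d i j (σ j) (σ i))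
      simpa using this
    have c2 : ∀ i, (∑ j, d i j (σ j) (σ i)) ^ 2 ≤ N * ∑ j, (d i j (σ j) (σ i)) ^ 2 := by
      intro i
      have := sq_sum_le_card_mul_sum_sq (s := (Finset.univ : Finset (Fin N)))
        (f := fun j => d i j (σ j) (σ i))
      simpa using this
    have c3 : ∑ i, ∑ j, (d i j (σ j) (σ i)) ^ 2 ≤ Q := by
      rw [hQ]
      refine Finset.sum_le_sum fun i _ => Finset.sum_le_sum fun j _ => ?_
      exact (Finset.single_le_sum (f := fun l => d i j (σ j) l ^ 2)
        (fun l _ => sq_nonneg _) (Finset.mem_univ (σ i))).trans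
        (Finset.single_le_sum (f := fun k => ∑ l, d i j k l ^ 2)
        (fun k _ => Finset.sum_nonneg fun l _ => sq_nonneg _) (Finset.mem_univ (σ j)))
    have c4 := Finset.sum_le_sum fun i (_ : i ∈ Finset.univ) => c2 i
    rw [← Finset.mul_sum] at c4
    have c5 : (N ^ 2 * Real.sqrt Vt) ^ 2 = N * (N * Q) := by
      rw [mul_pow, Real.sq_sqrt hV0, hV]; field_simp
    rw [c5]
    exact c1.trans (mul_le_mul_of_nonneg_left
      (c4.trans (mul_le_mul_of_nonneg_left c3 hN0.le)) hN0.le)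
  have hh := cd_hoeff (fun σ : Equiv.Perm (Fin N) => s * ∑ i, ∑ j, d i j (σ j) (σ i)) (-b) b
    (fun σ => by
      rw [← abs_le, abs_mul]
      exact mul_le_mul_of_nonneg_left (hX σ) (abs_nonneg s))
  have hc : (Fintype.card (Equiv.Perm (Fin N)) : ℝ) = (Nat.factorial N : ℝ) := by
    rw [Fintype.card_perm, Fintype.card_fin]
  rw [hc] at hh
  refine hh.trans (Real.exp_le_exp.mpr ?_)
  have h1 : (b - -b) ^ 2 / 8 = (s * N ^ 2) ^ 2 * Vt / 2 := by
    rw [hb]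
    have := Real.sq_sqrt hV0
    have h' := sq_abs s
    calc _ = |s| ^ 2 * N ^ 4 * (Real.sqrt Vt) ^ 2 / 2 := by ring
      _ = _ := by rw [this, h']; ring
  have h3 := mul_le_mul_of_nonneg_right hs hV0
  rw [h1, ← Finset.mul_sum, mul_div_assoc]
  unfold permExp
  linarith

/-- Combinatorial decoupling. -/
theorem combinatorial_decoupling (N : ℕ) (hN : 20 ≤ N)
    (d : Fin N → Fin N → Fin N → Fin N → ℝ)
    (hdeg1 : ∀ i j k, ∑ l, d i j k l = 0)
    (hdeg2 : ∀ i j l, ∑ k, d i j k l = 0)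
    (hdeg3 : ∀ i k l, ∑ j, d i j k l = 0)
    (hdeg4 : ∀ j k l, ∑ i, d i j k l = 0)
    (N₁ : ℕ) (hN₁ : N₁ = (N + 1) / 2)
    (Vt : ℝ) (hV : Vt = (∑ i, ∑ j, ∑ k, ∑ l, (d i j k l) ^ 2) / (N : ℝ) ^ 2)
    (lam : ℝ) (hlam : 0 ≤ lam) :
    permExp N (fun σ => Real.exp (lam *
        ((∑ p ∈ (Finset.univ : Finset (Fin N)).offDiag, d p.1 p.2 (σ p.1) (σ p.2))
          - permExp N (fun σ' =>
              ∑ p ∈ (Finset.univ : Finset (Fin N)).offDiag, d p.1 p.2 (σ' p.1) (σ' p.2)))))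
      ≤ Real.exp (50 * Vt * lam ^ 2) *
        Real.sqrt
          ((∑ I ∈ Finset.powersetCard N₁ (Finset.univ : Finset (Fin N)),
            ∑ J ∈ Finset.powersetCard N₁ (Finset.univ : Finset (Fin N)),
              (∑ f ∈ bijSet I J, ∑ g ∈ bijSet Iᶜ Jᶜ,
                  Real.exp (9 * lam * ∑ i ∈ I, ∑ j ∈ Iᶜ, tildeD d I J i j (f i) (g j)))
                / (((bijSet I J).card : ℝ) * ((bijSet Iᶜ Jᶜ).card : ℝ)))
            / ((Finset.powersetCard N₁ (Finset.univ : Finset (Fin N))).card : ℝ) ^ 2) := by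
  have hN0 : 0 < N := by omega
  have hn : 2 ≤ N₁ := by omega
  have hnN : N₁ + 2 ≤ N := by omega
  have hF0 : (0:ℝ) < (Nat.factorial N : ℝ) := by exact_mod_cast Nat.factorial_pos N
  have hNr : (20:ℝ) ≤ N := by exact_mod_cast hN
  obtain ⟨v, hv⟩ : ∃ v : ℝ, v = N := ⟨_, rfl⟩
  obtain ⟨P, hP⟩ : ∃ P : ℝ, P = (N₁ : ℝ) * ((N - N₁ : ℕ) : ℝ) := ⟨_, rfl⟩
  have hv20 : 20 ≤ v := by rw [hv]; exact hNr
  have h4P : v ^ 2 - 1 ≤ 4 * P := by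
    have h1 : (N₁ : ℝ) + ((N - N₁ : ℕ) : ℝ) = N := by
      rw [← Nat.cast_add]; congr 1; omega
    have h2 : ((N - N₁ : ℕ) : ℝ) ≤ N₁ := by exact_mod_cast (by omega : N - N₁ ≤ N₁)
    have h3 : (N₁ : ℝ) ≤ ((N - N₁ : ℕ) : ℝ) + 1 := by exact_mod_cast (by omega : N₁ ≤ (N - N₁) + 1)
    rw [hv, hP, ← h1]
    nlinarith
  have hMp : 0 < v * (v-1) * (v-2) * (v-3) := by
    have a1 : 0 < v - 1 := by linarith
    have a2 : 0 < v - 2 := by linarith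
    have a3 : 0 < v - 3 := by linarith
    have a0 : 0 < v := by linarith
    positivity
  obtain ⟨κ, hk⟩ : ∃ k : ℝ, k * (v * (v-1) * (v-2) * (v-3))
      = (P-v)*(v-2)*(v-3) + (2*P-v)*(v-3) + (P-v+1) := ⟨_, div_mul_cancel₀ _ hMp.ne'⟩
  obtain ⟨δ, hδ⟩ : ∃ k : ℝ, k * (v * (v-1) * (v-2) * (v-3))
      = -(2*P-v)*(v-3) + (v-2)*(v-3) - 5*(P-v+1) := ⟨_, div_mul_cancel₀ _ hMp.ne'⟩
  obtain ⟨γ, hγ⟩ : ∃ k : ℝ, k * (v * (v-1) * (v-2) * (v-3)) = P-v+1 :=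
    ⟨_, div_mul_cancel₀ _ hMp.ne'⟩
  obtain ⟨b1, b2, b3, b4, b5⟩ := cd_num v P hv20 h4P κ δ γ hk hδ hγ
  have hκ0 : 0 < κ := by linarith
  have hrel0 := cd_G N₁ hn hnN d hdeg1 hdeg2 hdeg3 hdeg4 v P hv hP κ δ γ hk hδ hγ
  set PP := Finset.powersetCard N₁ (Finset.univ : Finset (Fin N)) with hPP
  have hPPne : PP.Nonempty := by
    rw [hPP, Finset.powersetCard_nonempty, Finset.card_univ, Fintype.card_fin]; omega
  have hC0 : (0:ℝ) < (PP.card : ℝ) := by exact_mod_cast hPPne.card_pos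
  have hInd : ∀ I ∈ PP, I.card = N₁ ∧ I.Nonempty ∧ (Iᶜ).Nonempty := by
    intro I hI
    have c : I.card = N₁ := (Finset.mem_powersetCard.mp hI).2
    refine ⟨c, Finset.card_pos.mp (by omega), Finset.card_pos.mp ?_⟩
    rw [Finset.card_compl, Fintype.card_fin, c]; omega
  set G : Equiv.Perm (Fin N) → ℝ := fun σ => (∑ I ∈ PP, cdUt d I σ σ) / (PP.card : ℝ) with hGdef
  have hsqrt : Real.exp (50 * Vt * lam ^ 2) = Real.sqrt (Real.exp (100 * Vt * lam ^ 2)) := by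
    rw [← Real.exp_half]; congr 1; ring
  rw [hsqrt]
  refine cd_abs (Nat.factorial N : ℝ) hF0 (by rw [Fintype.card_perm, Fintype.card_fin])
    _ (fun σ => ∑ i, d i i (σ i) (σ i)) (fun σ => ∑ i, ∑ j, d i j (σ j) (σ i)) G lam κ δ γ
    (∑ i, ∑ j, d i i j j) _ (permExp N (fun σ => ∑ i, d i i (σ i) (σ i)))
    (permExp N (fun σ => ∑ i, ∑ j, d i j (σ j) (σ i))) _ _ b1 rfl rfl rfl ?_ ?_ ?_ ?_ ?_
  · simp only [hGdef]
    rw [← Finset.sum_div, Finset.sum_comm,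
      Finset.sum_eq_zero fun I hI => cd_Ut_mean d I (hInd I hI).2.1, zero_div]
  · intro σ
    simp only [hGdef]
    rw [hrel0 σ, mul_div_cancel_left₀ _ hC0.ne']
  · refine cd_Dbound hN0 d _ Vt lam _ rfl hV ?_
    have e : -(4 * lam * δ / κ) * (N:ℝ) = 4 * lam * ((-δ * v) / κ) := by rw [hv]; ring
    have h0 : 0 ≤ (-δ * v) / κ := div_nonneg (mul_nonneg (by linarith) (by linarith)) hκ0.le
    have h1 : (-δ * v) / κ ≤ 5 / 2 := by rw [div_le_iff₀ hκ0]; exact b5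
    rw [e, mul_pow]
    have h2 : ((-δ * v) / κ) ^ 2 ≤ (5/2) ^ 2 := pow_le_pow_left₀ h0 h1 2
    nlinarith [mul_le_mul_of_nonneg_left h2 (sq_nonneg (4 * lam))]
  · refine cd_Xbound hN0 d _ Vt lam _ rfl hV ?_
    have e : -(4 * lam * γ / κ) * (N:ℝ) ^ 2 = -(4 * lam) * ((γ * v ^ 2) / κ) := by rw [hv]; ring
    have h0 : 0 ≤ (γ * v ^ 2) / κ := div_nonneg (mul_nonneg b2 (sq_nonneg v)) hκ0.le
    have h1 : (γ * v ^ 2) / κ ≤ 7 / 2 := by rw [div_le_iff₀ hκ0]; exact b3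
    rw [e, mul_pow]
    have h2 : ((γ * v ^ 2) / κ) ^ 2 ≤ (7/2) ^ 2 := pow_le_pow_left₀ h0 h1 2
    nlinarith [mul_le_mul_of_nonneg_left h2 (sq_nonneg (-(4 * lam))), sq_nonneg lam]
  · have hI : ∀ I ∈ PP, (∑ J ∈ PP, (∑ f ∈ bijSet I J, ∑ g ∈ bijSet Iᶜ Jᶜ,
        Real.exp (9 * lam * ∑ i ∈ I, ∑ j ∈ Iᶜ, tildeD d I J i j (f i) (g j)))
          / (((bijSet I J).card : ℝ) * ((bijSet Iᶜ Jᶜ).card : ℝ)))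
        = (PP.card : ℝ) * ((∑ σ : Equiv.Perm (Fin N), Real.exp (9 * lam * cdUt d I σ σ))
            / (Nat.factorial N : ℝ)) := by
      intro I hI
      obtain ⟨c1, c2, c3⟩ := hInd I hI
      have hr := cd_rhs hN0 N₁ I c1 (fun f g => Real.exp (9 * lam * cdUt d I f g)) (by
        intro f g f' g' hf hg
        have : cdUt d I f g = cdUt d I f' g' := by
          unfold cdUt
          congr 1
          · congr 1
            · congr 1
              · exact Finset.sum_congr rfl fun i hi => Finset.sum_congr rfl fun j hj => by
                  rw [hf i hi, hg j hj]
              · congr 1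
                exact Finset.sum_congr rfl fun a _ => Finset.sum_congr rfl fun i hi =>
                  Finset.sum_congr rfl fun j hj => by rw [hf i hi, hg j hj]
            · congr 1
              exact Finset.sum_congr rfl fun i hi => Finset.sum_congr rfl fun a _ =>
                Finset.sum_congr rfl fun j hj => by rw [hf i hi, hg j hj]
          · congr 1
            exact Finset.sum_congr rfl fun a _ => Finset.sum_congr rfl fun i hi =>
              Finset.sum_congr rfl fun c _ =>
                Finset.sum_congr rfl fun j hj => by rw [hf i hi, hg j hj]
        simp only [this])
      rw [← hPP, div_eq_iff hC0.ne'] at hr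
      rw [mul_comm (PP.card : ℝ), ← hr]
      refine Finset.sum_congr rfl fun J _ => ?_
      congr 1
      refine Finset.sum_congr rfl fun f hf => Finset.sum_congr rfl fun g hg => ?_
      have hf' := (Finset.mem_filter.mp hf).2
      have hg' := (Finset.mem_filter.mp hg).2
      rw [cd_tilde d I J f g hf' hg' c2 c3]
      rfl
    rw [Finset.sum_congr rfl hI, ← Finset.mul_sum, sq, mul_div_mul_left _ _ hC0.ne',
      ← Finset.sum_div, div_right_comm, Finset.sum_comm, Finset.sum_div (a := (PP.card : ℝ))]
    refine div_le_div_of_nonneg_right (Finset.sum_le_sum fun σ _ => ?_) hF0.le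
    have hj := convexOn_exp.map_sum_le (t := PP) (w := fun _ => 1 / (PP.card : ℝ))
      (p := fun I => 9 * lam * cdUt d I σ σ) (fun _ _ => by positivity)
      (by rw [Finset.sum_const, nsmul_eq_mul]; field_simp) (fun _ _ => Set.mem_univ _)
    simp only [smul_eq_mul, ← Finset.mul_sum] at hj
    refine le_trans (le_of_eq ?_) (hj.trans (le_of_eq ?_))
    · congr 1; simp only [hGdef]; ring
    · ring
end

section
/- Let N, M be positive integers, let π be uniformly distributed on S_N and τ uniformly distributed on S_M, independent of each other. Let D = [d(i,j,k,ℓ)] ∈ R^{N×M×N×M} be a (possibly random) tensor, independent of (π,τ), satisfying almost surely, for all i,k ∈ [N] and j,ℓ ∈ [M]: Σ_{j'∈[M], ℓ'∈[M]} d(i,j',k,ℓ') = 0 and Σ_{i'∈[N], k'∈[N]} d(i',j,k',ℓ) = 0. Let G_1,...,G_N, G'_1,...,G'_M be i.i.d. standard Gaussian random variables independent of (D,π,τ). Then for every λ ≥ 0: E[ exp( λ Σ_{i∈[N], j∈[M]} d(i,j,π(i),τ(j)) ) ] ≤ E[ exp( 12 λ Σ_{i∈[N], j∈[M]} d(i,j,π(i),τ(j))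 G_i G'_j ) ]. -/
open scoped BigOperators Classical ENNReal
open MeasureTheory ProbabilityTheory

/-- Standard Gaussian product measure on `Fin n → ℝ` (i.i.d. `N(0,1)` coordinates). -/
noncomputable def gaussPi (n : ℕ) : Measure (Fin n → ℝ) :=
  Measure.pi (fun _ : Fin n => gaussianReal 0 1)

lemma cr_exp_ineq_aux (t : ℝ) (ht : 0 ≤ t) : 2 * (Real.exp t - 1) ≤ t * (Real.exp t + 1) := by
  have h1 : 0 ≤ Real.exp t - 1 := by linarith [Real.add_one_le_exp t]
  have h := Real.le_log_one_add_of_nonneg h1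
  rw [add_sub_cancel, Real.log_exp, div_le_iff₀ (by linarith)] at h
  linarith

lemma cr_exp_ineq_aux2 (x y : ℝ) (h : y ≤ x) :
    (x - y) * (Real.exp x - Real.exp y) ≤ (x - y) ^ 2 * (Real.exp x + Real.exp y) / 2 := by
  have h0 : 0 ≤ x - y := by linarith
  have h1 := cr_exp_ineq_aux (x - y) h0
  have h2 : Real.exp x = Real.exp (x - y) * Real.exp y := by
    rw [← Real.exp_add]; congr 1; ring
  have h3 := Real.exp_pos y
  rw [h2]
  have := mul_le_mul_of_nonneg_left h1 (mul_nonneg h0 h3.le)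
  nlinarith

lemma cr_exp_ineq (x y : ℝ) :
    (x - y) * (Real.exp x - Real.exp y) ≤ (x - y) ^ 2 * (Real.exp x + Real.exp y) / 2 := by
  rcases le_total y x with h | h
  · exact cr_exp_ineq_aux2 x y h
  · have := cr_exp_ineq_aux2 y x h
    nlinarith

lemma cr_exp_ineq_theta (θ x y : ℝ) (hθ : 0 ≤ θ) :
    (x - y) * (Real.exp (θ * x) - Real.exp (θ * y))
      ≤ θ * ((x - y) ^ 2 * (Real.exp (θ * x) + Real.exp (θ * y)) / 2) := by
  rcases hθ.eq_or_lt with h | h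
  · simp [← h]
  · have := cr_exp_ineq (θ * x) (θ * y)
    have h2 : θ * ((x - y) * (Real.exp (θ * x) - Real.exp (θ * y)))
      ≤ θ * (θ * ((x - y) ^ 2 * (Real.exp (θ * x) + Real.exp (θ * y)) / 2)) := by
      calc _ = (θ * x - θ * y) * (Real.exp (θ * x) - Real.exp (θ * y)) := by ring
        _ ≤ _ := this
        _ = _ := by ring
    exact le_of_mul_le_mul_left h2 h

/-- Average of `f (σ i)` over permutations. -/
lemma cr_avg (N : ℕ) (f : Fin N → ℝ) (i : Fin N) :
    (N : ℝ) * ∑ σ : Equiv.Perm (Fin N), f (σ i)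
      = (Fintype.card (Equiv.Perm (Fin N)) : ℝ) * ∑ k, f k := by
  have : NeZero N := ⟨by rintro rfl; exact i.elim0⟩
  have h1 : ∀ k : Fin N, ∑ σ : Equiv.Perm (Fin N), f (σ i)
      = ∑ σ : Equiv.Perm (Fin N), f (σ i + k) := by
    intro k
    rw [← Equiv.sum_comp (Equiv.mulLeft (Equiv.addRight k))]
    rfl
  have h2 : ∀ m : Fin N, ∑ k : Fin N, f (m + k) = ∑ k, f k := fun m =>
    Equiv.sum_comp (Equiv.addLeft m) f
  calc (N : ℝ) * ∑ σ : Equiv.Perm (Fin N), f (σ i)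
      = ∑ k : Fin N, ∑ σ : Equiv.Perm (Fin N), f (σ i) := by simp
    _ = ∑ k : Fin N, ∑ σ : Equiv.Perm (Fin N), f (σ i + k) :=
        Finset.sum_congr rfl fun k _ => h1 k
    _ = _ := by rw [Finset.sum_comm]; simp [h2]

lemma cr_avg2 (N : ℕ) (d : Fin N → Fin N → ℝ) :
    (N : ℝ) * ∑ σ : Equiv.Perm (Fin N), ∑ i, d i (σ i)
      = (Fintype.card (Equiv.Perm (Fin N)) : ℝ) * ∑ i, ∑ k, d i k := by
  rw [Finset.sum_comm, Finset.mul_sum, Finset.mul_sum]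
  exact Finset.sum_congr rfl fun i _ => cr_avg N (d i) i

lemma cr_swap (N : ℕ) (d : Fin N → Fin N → ℝ) (σ : Equiv.Perm (Fin N)) (a b : Fin N) :
    (∑ i, d i (σ i)) - ∑ i, d i ((σ * Equiv.swap a b) i)
      = d a (σ a) + d b (σ b) - d a (σ b) - d b (σ a) := by
  by_cases hab : a = b
  · subst hab; simp
  rw [← Finset.sum_sub_distrib]
  rw [← Finset.sum_subset (Finset.subset_univ {a, b})]
  · rw [Finset.sum_pair hab]; simp; ring
  · intro i _ hi
    simp only [Finset.mem_insert, Finset.mem_singleton, not_or] at hi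
    simp [Equiv.swap_apply_of_ne_of_ne hi.1 hi.2]

/-- Stein-type bound. -/
lemma cr_stein (N : ℕ) (hN : 0 < N) (d : Fin N → Fin N → ℝ) (hd : ∑ i, ∑ k, d i k = 0)
    (θ : ℝ) (hθ : 0 ≤ θ) :
    ∑ σ : Equiv.Perm (Fin N), (∑ i, d i (σ i)) * Real.exp (θ * ∑ i, d i (σ i))
      ≤ 2 * θ * ∑ σ : Equiv.Perm (Fin N),
        (∑ i, d i (σ i) ^ 2 + (∑ i, ∑ k, d i k ^ 2) / N) * Real.exp (θ * ∑ i, d i (σ i)) := by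
  have hN' : (0 : ℝ) < N := by exact_mod_cast hN
  set X : Equiv.Perm (Fin N) → ℝ := fun σ => ∑ i, d i (σ i) with hX
  have key : ∀ a b : Fin N,
      ∑ σ, (X σ - X (σ * Equiv.swap a b)) * Real.exp (θ * X σ)
        ≤ (θ / 2) * ∑ σ, (X σ - X (σ * Equiv.swap a b)) ^ 2 * Real.exp (θ * X σ) := by
    intro a b
    have inv : ∀ F : Equiv.Perm (Fin N) → ℝ, ∑ σ, F σ = ∑ σ, F (σ * Equiv.swap a b) := fun F =>
      (Equiv.sum_comp (Equiv.mulRight (Equiv.swap a b)) F).symm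
    have e1 := inv fun σ => (X σ - X (σ * Equiv.swap a b)) * Real.exp (θ * X σ)
    have e2 := inv fun σ => (X σ - X (σ * Equiv.swap a b)) ^ 2 * Real.exp (θ * X σ)
    simp only [mul_assoc, Equiv.swap_mul_self, mul_one] at e1 e2
    have e3 : ∑ σ, (X σ - X (σ * Equiv.swap a b)) *
          (Real.exp (θ * X σ) - Real.exp (θ * X (σ * Equiv.swap a b)))
        ≤ ∑ σ, θ * ((X σ - X (σ * Equiv.swap a b)) ^ 2 *
          (Real.exp (θ * X σ) + Real.exp (θ * X (σ * Equiv.swap a b))) / 2) :=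
      Finset.sum_le_sum fun σ _ => cr_exp_ineq_theta _ _ _ hθ
    have e4 : ∑ σ, (X σ - X (σ * Equiv.swap a b)) *
          (Real.exp (θ * X σ) - Real.exp (θ * X (σ * Equiv.swap a b)))
        = ∑ σ, (X σ - X (σ * Equiv.swap a b)) * Real.exp (θ * X σ)
        + ∑ σ, (X (σ * Equiv.swap a b) - X σ) * Real.exp (θ * X (σ * Equiv.swap a b)) := by
      rw [← Finset.sum_add_distrib]
      exact Finset.sum_congr rfl fun σ _ => by ring
    have e5 : ∑ σ, θ * ((X σ - X (σ * Equiv.swap a b)) ^ 2 *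
          (Real.exp (θ * X σ) + Real.exp (θ * X (σ * Equiv.swap a b))) / 2)
        = θ / 2 * (∑ σ, (X σ - X (σ * Equiv.swap a b)) ^ 2 * Real.exp (θ * X σ)
        + ∑ σ, (X (σ * Equiv.swap a b) - X σ) ^ 2 * Real.exp (θ * X (σ * Equiv.swap a b))) := by
      rw [← Finset.sum_add_distrib, Finset.mul_sum]
      exact Finset.sum_congr rfl fun σ _ => by ring
    rw [e4, e5, ← e1, ← e2] at e3
    linarith
  have key2 := Finset.sum_le_sum fun a (_ : a ∈ Finset.univ) =>
    Finset.sum_le_sum fun b (_ : b ∈ Finset.univ) => key a b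
  have hperm : ∀ (σ : Equiv.Perm (Fin N)) (f : Fin N → ℝ), ∑ b, f (σ b) = ∑ b, f b :=
    fun σ f => Equiv.sum_comp σ f
  have l1 : ∑ a, ∑ b, ∑ σ, (X σ - X (σ * Equiv.swap a b)) * Real.exp (θ * X σ)
      = 2 * N * ∑ σ, X σ * Real.exp (θ * X σ) := by
    have : ∀ σ : Equiv.Perm (Fin N), ∑ a, ∑ b, (X σ - X (σ * Equiv.swap a b)) = 2 * N * X σ := by
      intro σ
      simp only [hX, cr_swap]
      simp only [Finset.sum_sub_distrib, Finset.sum_add_distrib, Finset.sum_const,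
        Finset.card_univ, Fintype.card_fin, nsmul_eq_mul, ← Finset.mul_sum]
      have t1 : ∑ a, ∑ b, d a (σ b) = 0 := by
        rw [← hd]; exact Finset.sum_congr rfl fun a _ => hperm σ (d a)
      have t2 : ∑ a, ∑ b, d b (σ a) = 0 := by rw [Finset.sum_comm]; exact t1
      rw [t1, t2]; ring
    calc _ = ∑ σ, (∑ a, ∑ b, (X σ - X (σ * Equiv.swap a b))) * Real.exp (θ * X σ) := by
          simp only [Finset.sum_mul]
          rw [Finset.sum_comm' (t' := Finset.univ) (s' := fun _ => Finset.univ) (by simp)]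
          rw [Finset.sum_congr rfl fun b _ => Finset.sum_comm, Finset.sum_comm]
          exact Finset.sum_congr rfl fun σ _ => Finset.sum_comm
      _ = _ := by
          rw [Finset.mul_sum]
          exact Finset.sum_congr rfl fun σ _ => by rw [this]; ring
  have l2 : ∑ a, ∑ b, (θ / 2) * ∑ σ, (X σ - X (σ * Equiv.swap a b)) ^ 2 * Real.exp (θ * X σ)
      ≤ (θ / 2) * ∑ σ, (8 * N * (∑ i, d i (σ i) ^ 2 + (∑ i, ∑ k, d i k ^ 2) / N))
          * Real.exp (θ * X σ) := by
    have : ∀ σ : Equiv.Perm (Fin N), ∑ a, ∑ b, (X σ - X (σ * Equiv.swap a b)) ^ 2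
        ≤ 8 * N * (∑ i, d i (σ i) ^ 2 + (∑ i, ∑ k, d i k ^ 2) / N) := by
      intro σ
      simp only [hX, cr_swap]
      calc _ ≤ ∑ a, ∑ b, 4 * (d a (σ a) ^ 2 + d b (σ b) ^ 2 + d a (σ b) ^ 2 + d b (σ a) ^ 2) :=
            Finset.sum_le_sum fun a _ => Finset.sum_le_sum fun b _ => by
              nlinarith [sq_nonneg (d a (σ a) - d b (σ b)), sq_nonneg (d a (σ b) - d b (σ a)),
                sq_nonneg (d a (σ a) + d b (σ b) + (d a (σ b) + d b (σ a)))]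
        _ = _ := by
            simp only [Finset.sum_add_distrib, Finset.sum_const,
              Finset.card_univ, Fintype.card_fin, nsmul_eq_mul, ← Finset.mul_sum]
            have t1 : ∑ a, ∑ b, d a (σ b) ^ 2 = ∑ i, ∑ k, d i k ^ 2 :=
              Finset.sum_congr rfl fun a _ => hperm σ (fun k => d a k ^ 2)
            have t2 : ∑ a, ∑ b, d b (σ a) ^ 2 = ∑ i, ∑ k, d i k ^ 2 := by
              rw [Finset.sum_comm]; exact t1
            rw [t1, t2]; field_simp; ring
    simp only [← Finset.mul_sum]
    refine mul_le_mul_of_nonneg_left ?_ (by positivity)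
    calc _ = ∑ σ, (∑ a, ∑ b, (X σ - X (σ * Equiv.swap a b)) ^ 2) * Real.exp (θ * X σ) := by
          simp only [Finset.sum_mul]
          rw [Finset.sum_comm' (t' := Finset.univ) (s' := fun _ => Finset.univ) (by simp)]
          rw [Finset.sum_congr rfl fun b _ => Finset.sum_comm, Finset.sum_comm]
          exact Finset.sum_congr rfl fun σ _ => Finset.sum_comm
      _ ≤ _ := Finset.sum_le_sum fun σ _ =>
          mul_le_mul_of_nonneg_right (this σ) (Real.exp_pos _).le
  rw [l1] at key2
  have l3 := key2.trans l2
  have l4 : ∑ σ, (8 * N * (∑ i, d i (σ i) ^ 2 + (∑ i, ∑ k, d i k ^ 2) / N)) * Real.exp (θ * X σ)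
    = 8 * N * ∑ σ : Equiv.Perm (Fin N),
      (∑ i, d i (σ i) ^ 2 + (∑ i, ∑ k, d i k ^ 2) / N) * Real.exp (θ * X σ) := by
    rw [Finset.mul_sum]; exact Finset.sum_congr rfl fun σ _ => by ring
  rw [l4] at l3
  refine le_of_mul_le_mul_left ?_ (show (0 : ℝ) < 2 * N by positivity)
  calc _ ≤ _ := l3
    _ = _ := by ring

/-- Entropy duality (finite, uniform). -/
lemma cr_entropy {ι : Type*} [Fintype ι] [Nonempty ι] (U Y : ι → ℝ)
    (hY : (Fintype.card ι : ℝ) ≤ ∑ s, Real.exp (Y s)) :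
    ∑ s, U s * Real.exp (Y s) ≤
      (∑ s, Real.exp (Y s)) * Real.log ((∑ s, Real.exp (U s)) / Fintype.card ι)
        + ∑ s, Y s * Real.exp (Y s) := by
  set n : ℝ := ((Fintype.card ι : ℕ) : ℝ) with hn
  have hn0 : 0 < n := by rw [hn]; exact_mod_cast Fintype.card_pos
  set Z := ∑ s, Real.exp (Y s) with hZ
  set W := ∑ s, Real.exp (U s) with hW
  have hZ0 : 0 < Z := by linarith
  have hW0 : 0 < W := Finset.sum_pos (fun _ _ => Real.exp_pos _) Finset.univ_nonempty
  set L := Real.log (W / n)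
  set l := Real.log (Z / n)
  have hl : 0 ≤ l := Real.log_nonneg (by rw [le_div_iff₀ hn0]; linarith)
  have eL : Real.exp L = W / n := Real.exp_log (by positivity)
  have el : Real.exp l = Z / n := Real.exp_log (by positivity)
  have pt : ∀ s, Real.exp (Y s) * ((U s - L) - (Y s - l))
      ≤ (Z / W) * Real.exp (U s) - Real.exp (Y s) := by
    intro s
    have h := mul_le_mul_of_nonneg_left
      (Real.add_one_le_exp ((U s - L) - (Y s - l))) (Real.exp_pos (Y s)).le
    rw [← Real.exp_add, show Y s + (U s - L - (Y s - l)) = U s + l - L by ring,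
      Real.exp_sub, Real.exp_add, eL, el] at h
    have : Real.exp (U s) * (Z / n) / (W / n) = (Z / W) * Real.exp (U s) := by
      field_simp
    rw [this] at h
    linarith
  have h := Finset.sum_le_sum fun s (_ : s ∈ Finset.univ) => pt s
  rw [Finset.sum_sub_distrib, ← Finset.mul_sum, ← hW, ← hZ, div_mul_cancel₀ _ hW0.ne',
    sub_self] at h
  have h2 : ∑ s, Real.exp (Y s) * ((U s - L) - (Y s - l))
      = ∑ s, U s * Real.exp (Y s) - ∑ s, Y s * Real.exp (Y s) - Z * L + Z * l := by
    rw [hZ, Finset.sum_mul, Finset.sum_mul, ← Finset.sum_sub_distrib, ← Finset.sum_sub_distrib,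
      ← Finset.sum_add_distrib]
    exact Finset.sum_congr rfl fun s _ => by ring
  rw [h2] at h
  nlinarith [mul_nonneg hZ0.le hl]

lemma cr_one (N : ℕ) (hN : 0 < N) (d : Fin N → Fin N → ℝ) (hd : ∑ i, ∑ k, d i k = 0) :
    ∑ σ : Equiv.Perm (Fin N), Real.exp (∑ i, d i (σ i))
      ≤ ∑ σ : Equiv.Perm (Fin N), Real.exp (6 * ∑ i, d i (σ i) ^ 2) := by
  have hN' : (0 : ℝ) < N := by exact_mod_cast hN
  set X : Equiv.Perm (Fin N) → ℝ := fun σ => ∑ i, d i (σ i) with hX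
  set A : Equiv.Perm (Fin N) → ℝ := fun σ => ∑ i, d i (σ i) ^ 2 with hA
  set B : ℝ := (∑ i, ∑ k, d i k ^ 2) / N with hB
  set n : ℝ := ((Fintype.card (Equiv.Perm (Fin N)) : ℕ) : ℝ) with hn
  have hn0 : 0 < n := by rw [hn]; exact_mod_cast Fintype.card_pos
  have hA0 : ∀ σ, 0 ≤ A σ := fun σ => Finset.sum_nonneg fun _ _ => sq_nonneg _
  have hB0 : 0 ≤ B := div_nonneg (Finset.sum_nonneg fun _ _ =>
    Finset.sum_nonneg fun _ _ => sq_nonneg _) hN'.le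
  have sX : ∑ σ, X σ = 0 := by
    have := cr_avg2 N d
    rw [hd, mul_zero] at this
    exact (mul_eq_zero.mp this).resolve_left hN'.ne'
  have sA : ∑ σ, A σ = n * B := by
    have := cr_avg2 N (fun i k => d i k ^ 2)
    rw [hB, ← mul_div_assoc, eq_div_iff hN'.ne', mul_comm]
    exact this
  set W := ∑ σ, Real.exp (3 * (A σ + B)) with hW
  have hWn : n ≤ W := by
    calc n = ∑ σ : Equiv.Perm (Fin N), (1 : ℝ) := by simp [hn]
      _ ≤ _ := Finset.sum_le_sum fun σ _ => Real.one_le_exp (by have := hA0 σ; positivity)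
  set L := Real.log (W / n) with hL
  have hL0 : 0 ≤ L := Real.log_nonneg (by rw [le_div_iff₀ hn0]; linarith)
  have eL : Real.exp L = W / n := Real.exp_log (by positivity)
  -- final comparison
  have hfin : W ≤ ∑ σ, Real.exp (6 * A σ) := by
    have j1 : n * Real.exp (6 * B) ≤ ∑ σ, Real.exp (6 * A σ) := by
      have pt : ∀ σ, Real.exp (6 * B) * (6 * (A σ - B) + 1) ≤ Real.exp (6 * A σ) := by
        intro σ
        have h := mul_le_mul_of_nonneg_left
          (Real.add_one_le_exp (6 * (A σ - B))) (Real.exp_pos (6 * B)).le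
        rwa [← Real.exp_add, show 6 * B + 6 * (A σ - B) = 6 * A σ by ring] at h
      have h := Finset.sum_le_sum fun s (_ : s ∈ Finset.univ) => pt s
      rw [← Finset.mul_sum, Finset.sum_add_distrib, ← Finset.mul_sum, Finset.sum_sub_distrib,
        sA] at h
      simp only [Finset.sum_const, Finset.card_univ, nsmul_eq_mul, ← hn, mul_one] at h
      linarith
    have j2 : W ≤ ∑ σ, (Real.exp (6 * A σ) + Real.exp (6 * B)) / 2 := by
      refine Finset.sum_le_sum fun σ _ => ?_
      have e1 : Real.exp (6 * A σ) = Real.exp (3 * A σ) ^ 2 := by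
        rw [← Real.exp_nat_mul]; congr 1; push_cast; ring
      have e2 : Real.exp (6 * B) = Real.exp (3 * B) ^ 2 := by
        rw [← Real.exp_nat_mul]; congr 1; push_cast; ring
      rw [mul_add, Real.exp_add, e1, e2]
      nlinarith [sq_nonneg (Real.exp (3 * A σ) - Real.exp (3 * B))]
    rw [← Finset.sum_div, Finset.sum_add_distrib] at j2
    simp only [Finset.sum_const, Finset.card_univ, nsmul_eq_mul, ← hn] at j2
    linarith
  refine le_trans ?_ hfin
  -- differential inequality
  set Z : ℝ → ℝ := fun θ => ∑ σ, Real.exp (θ * X σ) with hZ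
  set Z' : ℝ → ℝ := fun θ => ∑ σ, X σ * Real.exp (θ * X σ) with hZ'
  have hZn : ∀ θ, n ≤ Z θ := by
    intro θ
    calc n = ∑ σ, (θ * X σ + 1) := by
          rw [Finset.sum_add_distrib, ← Finset.mul_sum, sX]; simp [hn]
      _ ≤ _ := Finset.sum_le_sum fun σ _ => Real.add_one_le_exp _
  have hdiff : ∀ θ, 0 ≤ θ → θ ≤ 1 → Z' θ ≤ 2 * θ * L * Z θ := by
    intro θ h0 h1
    have s1 : Z' θ ≤ 2 * θ * ∑ σ, (A σ + B) * Real.exp (θ * X σ) := cr_stein N hN d hd θ h0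
    have s2 : ∑ σ, (3 * (A σ + B)) * Real.exp (θ * X σ)
        ≤ Z θ * L + ∑ σ, (θ * X σ) * Real.exp (θ * X σ) :=
      cr_entropy (fun σ => 3 * (A σ + B)) (fun σ => θ * X σ) (hZn θ)
    simp only [mul_assoc, ← Finset.mul_sum] at s2
    change _ ≤ _ + θ * Z' θ at s2
    have hZp : 0 < Z θ := hn0.trans_le (hZn θ)
    by_cases hneg : Z' θ ≤ 0
    · exact hneg.trans (by positivity)
    · push Not at hneg
      have s3 : 2 * θ * ∑ σ, (A σ + B) * Real.exp (θ * X σ) ≤ 2 * θ / 3 * (Z θ * L + θ * Z' θ) := by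
        have := mul_le_mul_of_nonneg_left s2 (show 0 ≤ 2 * θ / 3 by positivity)
        linarith
      have s4 : θ * θ * Z' θ ≤ 1 * Z' θ := by
        apply mul_le_mul_of_nonneg_right _ hneg.le
        nlinarith
      nlinarith
  have hder : ∀ θ, HasDerivAt Z (Z' θ) θ := by
    intro θ
    have : HasDerivAt Z (∑ σ, Real.exp (θ * X σ) * (1 * X σ)) θ := by
      apply HasDerivAt.fun_sum
      intro σ _
      exact ((hasDerivAt_id θ).mul_const (X σ)).exp
    convert this using 1
    exact Finset.sum_congr rfl fun σ _ => by ring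
  have hder2 : ∀ θ, HasDerivAt (fun θ => Z θ * Real.exp (-(L * θ ^ 2)))
      ((Z' θ - 2 * θ * L * Z θ) * Real.exp (-(L * θ ^ 2))) θ := by
    intro θ
    have h1 : HasDerivAt (fun θ : ℝ => -(L * θ ^ 2)) (-(L * (2 * θ))) θ := by
      refine (((hasDerivAt_pow 2 θ).const_mul L).fun_neg).congr_deriv ?_
      norm_num
    exact ((hder θ).fun_mul h1.exp).congr_deriv (by ring)
  have anti : AntitoneOn (fun θ => Z θ * Real.exp (-(L * θ ^ 2))) (Set.Icc 0 1) := by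
    apply antitoneOn_of_deriv_nonpos (convex_Icc 0 1)
    · exact fun θ _ => (hder2 θ).continuousAt.continuousWithinAt
    · exact fun θ _ => (hder2 θ).differentiableAt.differentiableWithinAt
    · intro θ hθ
      rw [interior_Icc] at hθ
      rw [(hder2 θ).deriv]
      exact mul_nonpos_of_nonpos_of_nonneg
        (by linarith [hdiff θ hθ.1.le hθ.2.le]) (Real.exp_pos _).le
  have h := anti (Set.left_mem_Icc.mpr zero_le_one) (Set.right_mem_Icc.mpr zero_le_one) zero_le_one
  have hZ0 : Z 0 = n := by simp [hZ, hn]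
  simp only [hZ0] at h
  norm_num [Real.exp_neg] at h
  rw [← div_eq_mul_inv, div_le_iff₀ (Real.exp_pos _), eL, mul_div_cancel₀ _ hn0.ne'] at h
  simpa [hZ] using h

lemma cr_gauss (n : ℕ) (c : Fin n → ℝ) :
    ∫⁻ g, ENNReal.ofReal (Real.exp (∑ i, c i * g i)) ∂(gaussPi n)
      = ENNReal.ofReal (Real.exp ((∑ i, c i ^ 2) / 2)) := by
  have hi : Integrable (fun g : Fin n → ℝ => ∏ i, Real.exp (c i * g i)) (gaussPi n) :=
    Integrable.fintype_prod (f := fun i x => Real.exp (c i * x))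
      fun i => integrable_exp_mul_gaussianReal (c i)
  have he : (∫ g, ∏ i, Real.exp (c i * g i) ∂(gaussPi n)) = Real.exp ((∑ i, c i ^ 2) / 2) := by
    have h1 : (∫ g, ∏ i, Real.exp (c i * g i) ∂(gaussPi n))
        = ∏ i, ∫ x, Real.exp (c i * x) ∂(gaussianReal 0 1) :=
      integral_fintype_prod_eq_prod (fun i x => Real.exp (c i * x))
    rw [h1, Finset.sum_div, Real.exp_sum]
    refine Finset.prod_congr rfl fun i _ => ?_
    have := congrFun (mgf_id_gaussianReal (μ := 0) (v := 1)) (c i)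
    simpa [mgf] using this
  rw [← he, ofReal_integral_eq_lintegral_ofReal hi
    (Filter.Eventually.of_forall fun g => Finset.prod_nonneg fun i _ => (Real.exp_pos _).le)]
  simp only [Real.exp_sum]

lemma cr_one_gauss (N : ℕ) (hN : 0 < N) (d : Fin N → Fin N → ℝ) (hd : ∑ i, ∑ k, d i k = 0) :
    ∑ σ : Equiv.Perm (Fin N), ENNReal.ofReal (Real.exp (∑ i, d i (σ i)))
      ≤ ∑ σ : Equiv.Perm (Fin N),
        ∫⁻ g, ENNReal.ofReal (Real.exp (∑ i, (√12 * d i (σ i)) * g i)) ∂(gaussPi N) := by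
  simp only [cr_gauss]
  rw [← ENNReal.ofReal_sum_of_nonneg fun _ _ => (Real.exp_pos _).le,
    ← ENNReal.ofReal_sum_of_nonneg fun _ _ => (Real.exp_pos _).le]
  apply ENNReal.ofReal_le_ofReal
  convert cr_one N hN d hd using 4
  simp only [mul_pow, ← Finset.mul_sum]
  rw [Real.sq_sqrt (by norm_num)]
  ring

lemma cr_two (N M : ℕ) (hN : 0 < N) (hM : 0 < M) (d : Fin N → Fin M → Fin N → Fin M → ℝ)
    (h1 : ∀ (i k : Fin N), ∑ j' : Fin M, ∑ l' : Fin M, d i j' k l' = 0)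
    (h2 : ∀ (j l : Fin M), ∑ i' : Fin N, ∑ k' : Fin N, d i' j k' l = 0) (lam : ℝ) :
    (∑ σ : Equiv.Perm (Fin N), ∑ τ : Equiv.Perm (Fin M),
        ENNReal.ofReal (Real.exp (lam * ∑ i : Fin N, ∑ j : Fin M, d i j (σ i) (τ j))))
      ≤ ∑ σ : Equiv.Perm (Fin N), ∑ τ : Equiv.Perm (Fin M),
        ∫⁻ g, ∫⁻ g',
          ENNReal.ofReal (Real.exp (12 * lam *
            ∑ i : Fin N, ∑ j : Fin M, d i j (σ i) (τ j) * g i * g' j))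
          ∂(gaussPi M) ∂(gaussPi N) := by
  have s12 : √12 * √12 = (12 : ℝ) := Real.mul_self_sqrt (by norm_num)
  have hcast : ∀ (σ : Equiv.Perm (Fin N)) (τ : Equiv.Perm (Fin M)) (g : Fin N → ℝ)
      (g' : Fin M → ℝ), 12 * lam * ∑ i : Fin N, ∑ j : Fin M, d i j (σ i) (τ j) * g i * g' j
      = ∑ j, (√12 * (∑ i, √12 * lam * d i j (σ i) (τ j) * g i)) * g' j := by
    intro σ τ g g'
    rw [Finset.sum_comm, Finset.mul_sum]
    refine Finset.sum_congr rfl fun j _ => ?_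
    rw [Finset.mul_sum, Finset.mul_sum, Finset.sum_mul]
    refine Finset.sum_congr rfl fun i _ => ?_
    linear_combination (-(lam * d i j (σ i) (τ j) * g i * g' j)) * s12
  simp only [hcast, cr_gauss]
  calc _ = ∑ τ : Equiv.Perm (Fin M), ∑ σ : Equiv.Perm (Fin N),
        ENNReal.ofReal (Real.exp (∑ i : Fin N, lam * ∑ j : Fin M, d i j (σ i) (τ j))) := by
        rw [Finset.sum_comm]; simp only [Finset.mul_sum]
    _ ≤ ∑ τ : Equiv.Perm (Fin M), ∑ σ : Equiv.Perm (Fin N), ∫⁻ g, ENNReal.ofReal (Real.exp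
          (∑ i, (√12 * (lam * ∑ j : Fin M, d i j (σ i) (τ j))) * g i)) ∂(gaussPi N) := by
        refine Finset.sum_le_sum fun τ _ => ?_
        refine cr_one_gauss N hN (fun i k => lam * ∑ j : Fin M, d i j k (τ j)) ?_
        simp only [← Finset.mul_sum]
        rw [Finset.sum_congr rfl fun i _ => Finset.sum_comm, Finset.sum_comm]
        simp [h2]
    _ = ∑ σ : Equiv.Perm (Fin N), ∫⁻ g, ∑ τ : Equiv.Perm (Fin M), ENNReal.ofReal (Real.exp
          (∑ j, (∑ i, √12 * lam * d i j (σ i) (τ j) * g i))) ∂(gaussPi N) := by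
        rw [Finset.sum_comm]
        refine Finset.sum_congr rfl fun σ _ => ?_
        rw [lintegral_finsetSum _ (fun τ _ => by fun_prop)]
        refine Finset.sum_congr rfl fun τ _ => ?_
        congr with g
        rw [Finset.sum_comm]
        congr 3 with i
        simp only [Finset.mul_sum, Finset.sum_mul]
        exact Finset.sum_congr rfl fun j _ => by ring
    _ ≤ ∑ σ : Equiv.Perm (Fin N), ∫⁻ g, ∑ τ : Equiv.Perm (Fin M), ENNReal.ofReal (Real.exp
          ((∑ j, (√12 * (∑ i, √12 * lam * d i j (σ i) (τ j) * g i)) ^ 2) / 2)) ∂(gaussPi N) := by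
        refine Finset.sum_le_sum fun σ _ => lintegral_mono fun g => ?_
        have := cr_one_gauss M hM (fun j l => ∑ i, √12 * lam * d i j (σ i) l * g i) (by
          rw [Finset.sum_congr rfl fun j _ => Finset.sum_comm, Finset.sum_comm]
          refine Finset.sum_eq_zero fun i _ => ?_
          simp only [← Finset.mul_sum, ← Finset.sum_mul, h1]
          simp)
        simpa only [cr_gauss] using this
    _ = _ := by
        refine Finset.sum_congr rfl fun σ _ => ?_
        rw [lintegral_finsetSum _ (fun τ _ => by fun_prop)]

/-- Combinatorial randomization.  The random tensor `D` lives on a probability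
space `(Ω, μ)` and is independent of the uniform permutations `π, τ` and of the
i.i.d. standard Gaussians `G, G'`; this independence is encoded by writing the
expectation as the outer integral over `Ω` of the average over permutations and
the Gaussian product measures.  Expectations of the (nonnegative) exponentials
are taken as lower Lebesgue integrals. -/
theorem combinatorial_randomization
    {Ω : Type*} [MeasurableSpace Ω] (μ : Measure Ω) [IsProbabilityMeasure μ]
    (N M : ℕ) (hN : 0 < N) (hM : 0 < M)
    (D : Ω → Fin N → Fin M → Fin N → Fin M → ℝ) (hD : Measurable D)
    (hcent1 : ∀ᵐ ω ∂μ, ∀ (i k : Fin N), ∑ j' : Fin M, ∑ l' : Fin M, D ω i j' k l' = 0)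
    (hcent2 : ∀ᵐ ω ∂μ, ∀ (j l : Fin M), ∑ i' : Fin N, ∑ k' : Fin N, D ω i' j k' l = 0)
    (lam : ℝ) (hlam : 0 ≤ lam) :
    (∫⁻ ω, (∑ σ : Equiv.Perm (Fin N), ∑ τ : Equiv.Perm (Fin M),
        ENNReal.ofReal (Real.exp (lam * ∑ i : Fin N, ∑ j : Fin M, D ω i j (σ i) (τ j))))
        / ((Nat.factorial N : ℝ≥0∞) * (Nat.factorial M : ℝ≥0∞)) ∂μ)
      ≤
    (∫⁻ ω, (∑ σ : Equiv.Perm (Fin N), ∑ τ : Equiv.Perm (Fin M),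
        ∫⁻ g, ∫⁻ g',
          ENNReal.ofReal (Real.exp (12 * lam *
            ∑ i : Fin N, ∑ j : Fin M, D ω i j (σ i) (τ j) * g i * g' j))
          ∂(gaussPi M) ∂(gaussPi N))
        / ((Nat.factorial N : ℝ≥0∞) * (Nat.factorial M : ℝ≥0∞)) ∂μ) := by
  refine lintegral_mono_ae ?_
  filter_upwards [hcent1, hcent2] with ω h1 h2
  exact ENNReal.div_le_div_right (cr_two N M hN hM (D ω) h1 h2 lam) _
end
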